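/- In the infinite-width limit, the NTK of the linear RNN with parameters (W,F,C) initialized i.i.d. N(0,ν_W), N(0,ν_F), N(0,ν_C) converges almost surely to K(x,x') = 𝒯(x)ᵀ D(ρ) 𝒯(x') ⊗ I_{n_y}, with scale factors ρ_j = ν_C(j ν_F ν_W^{j-1} + ν_W^j) + ν_F ν_W^j. Hence the linear RNN NTK equals the NTK of a scaled 1D convolutional model with these specific scale factors. -/

import Mathlib

open MeasureTheory ProbabilityTheory Filter Matrix

/-- Hidden state of the linear RNN `h_t = (1/√n) W h_{t-1} + F x_t`, `h_{-1} = 0`. -/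
noncomputable def rnnH (n nx : ℕ) (Wm : Fin n → Fin n → ℝ)
    (Fm : Fin n → Fin nx → ℝ) (x : ℕ → Fin nx → ℝ) : ℕ → Fin n → ℝ
  | 0 => fun i => ∑ k : Fin nx, Fm i k * x 0 k
  | t + 1 => fun i =>
      (Real.sqrt n)⁻¹ * (∑ i' : Fin n, Wm i i' * rnnH n nx Wm Fm x t i') +
        ∑ k : Fin nx, Fm i k * x (t + 1) k

/-- Output `y_t = (1/√n) C h_t` of the linear RNN, as a function of the full
parameter triple `θ = (W, F, C)`. -/
noncomputable def rnnY (n nx ny : ℕ)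
    (θ : (Fin n → Fin n → ℝ) × (Fin n → Fin nx → ℝ) × (Fin ny → Fin n → ℝ))
    (x : ℕ → Fin nx → ℝ) (t : ℕ) (m : Fin ny) : ℝ :=
  (Real.sqrt n)⁻¹ * ∑ i : Fin n, θ.2.2 m i * rnnH n nx θ.1 θ.2.1 x t i

/-- The empirical NTK of the linear RNN at parameters `θ`: the sum over all scalar
parameter coordinates (entries of `W`, `F` and `C`) of the products of the partial
derivatives of the outputs. -/
noncomputable def rnnNTK (n nx ny : ℕ)
    (θ : (Fin n → Fin n → ℝ) × (Fin n → Fin nx → ℝ) × (Fin ny → Fin n → ℝ))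
    (x x' : ℕ → Fin nx → ℝ) (t s : ℕ) (m m' : Fin ny) : ℝ :=
  (∑ a : Fin n, ∑ b : Fin n,
      fderiv ℝ (fun θ' => rnnY n nx ny θ' x t m) θ
          ((fun i j => if i = a ∧ j = b then (1 : ℝ) else 0), 0, 0) *
        fderiv ℝ (fun θ' => rnnY n nx ny θ' x' s m') θ
          ((fun i j => if i = a ∧ j = b then (1 : ℝ) else 0), 0, 0)) +
  (∑ a : Fin n, ∑ k : Fin nx,
      fderiv ℝ (fun θ' => rnnY n nx ny θ' x t m) θ
          (0, (fun i j => if i = a ∧ j = k then (1 : ℝ) else 0), 0) *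
        fderiv ℝ (fun θ' => rnnY n nx ny θ' x' s m') θ
          (0, (fun i j => if i = a ∧ j = k then (1 : ℝ) else 0), 0)) +
  (∑ c : Fin ny, ∑ a : Fin n,
      fderiv ℝ (fun θ' => rnnY n nx ny θ' x t m) θ
          (0, 0, (fun i j => if i = c ∧ j = a then (1 : ℝ) else 0)) *
        fderiv ℝ (fun θ' => rnnY n nx ny θ' x' s m') θ
          (0, 0, (fun i j => if i = c ∧ j = a then (1 : ℝ) else 0)))

/-- The block Toeplitz matrix `𝒯(x)` with `(j,t)` block `x_{t-j}`. -/
def toepMat (T nx : ℕ) (x : ℕ → Fin nx → ℝ) :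
    Matrix (Fin T × Fin nx) (Fin T) ℝ :=
  Matrix.of fun p t => if (p.1 : ℕ) ≤ (t : ℕ) then x ((t : ℕ) - (p.1 : ℕ)) p.2 else 0

/-- The block diagonal scaling matrix `D(ρ)`. -/
def scaleMat (T nx : ℕ) (ρ : ℕ → ℝ) : Matrix (Fin T × Fin nx) (Fin T × Fin nx) ℝ :=
  Matrix.diagonal fun p => ρ (p.1 : ℕ)

/-!
Write `A = n^(-1/2) W`. The state is `∑ j, A^j F x_{t-1-j}`, so the NTK at width `n` is a polynomial
in the normalized Gram matrices `n⁻¹ Fᵀ w(A) F` and `n⁻¹ C w(A) Cᵀ` of words `w` in the letters `A`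
and `Aᵀ`.

These Gram matrices converge almost surely to a multiple of the identity, the multiple being the
variance of the entries times the moment of a circular element along `w`. Indeed Stein's lemma,
applied to the first letter of `w`, splits the word at each later letter: the opposite letter gives
the recursion of the circular moments, up to centred observables of shorter words, and every other
contribution has an additional factor `n⁻¹`. Inductively, the mean of a product of `2 r` centred
observables is `O(n⁻ʳ)`; fourth moments are therefore summable, and Borel–Cantelli applies.

Among the words `A^i (Aᵀ)^j` and `(Aᵀ)^i A^j`, only those with `i = j` have nonzero moment, namely
`ν_W^j`. In the contribution of `W`, there are `J` ways to choose a power `j` after and a power `i`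
before the differentiated matrix with `i + j + 1 = J`, whence the term `J ν_F ν_W^(J-1)` of the
scale factors.
-/

section Words

variable {m R : Type*} [Fintype m] [DecidableEq m] [CommRing R]

/-- The letter `A` (coded by `true`) or `Aᵀ` (coded by `false`). -/
def letter (A : Matrix m m R) (b : Bool) : Matrix m m R := if b then A else Aᵀ

/-- The product of letters `A`, `Aᵀ` spelled by a list of booleans. -/
def word (A : Matrix m m R) (w : List Bool) : Matrix m m R := (w.map (letter A)).prod

/-- The spelling of the transpose of a word. -/
def wordStar (w : List Bool) : List Bool := (w.map not).reverse

@[simp]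
theorem word_nil (A : Matrix m m R) : word A [] = 1 := rfl

theorem word_cons (A : Matrix m m R) (b : Bool) (w : List Bool) :
    word A (b :: w) = letter A b * word A w := List.prod_cons

theorem word_append (A : Matrix m m R) (w w' : List Bool) :
    word A (w ++ w') = word A w * word A w' := by
  simp only [word, List.map_append, List.prod_append]

theorem word_wordStar (A : Matrix m m R) (w : List Bool) : word A (wordStar w) = (word A w)ᵀ := by
  have letter_not : letter A ∘ not = Matrix.transpose ∘ letter A := by
    funext b; cases b <;> simp [letter]
  rw [word, word, wordStar, Matrix.transpose_list_prod, List.map_reverse, List.map_map,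
    List.map_map, letter_not]

@[simp]
theorem length_wordStar (w : List Bool) : (wordStar w).length = w.length := by
  rw [wordStar, List.length_reverse, List.length_map]

theorem word_map {S : Type*} [CommRing S] (f : R →+* S) (A : Matrix m m R) (w : List Bool) :
    (word A w).map f = word (A.map f) w := by
  have letter_map (b : Bool) : f.mapMatrix (letter A b) = letter (A.map f) b := by
    cases b <;> rfl
  simp only [word, ← f.mapMatrix_apply, map_list_prod, List.map_map, Function.comp_def, letter_map]

theorem word_replicate_true (A : Matrix m m R) (q : ℕ) :
    word A (List.replicate q true) = A ^ q := by
  simp [word, letter]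

theorem word_replicate_false (A : Matrix m m R) (q : ℕ) :
    word A (List.replicate q false) = (A ^ q)ᵀ := by
  simp [word, letter, Matrix.transpose_pow]

end Words

section Leibniz

variable {m R : Type*} [Fintype m] [CommRing R] [Algebra ℝ R] (d : Derivation ℝ R R)

theorem map_derivation_mul {l o : Type*} (X : Matrix l m R) (Z : Matrix m o R) :
    (X * Z).map d = X.map d * Z + X * Z.map d := by
  ext i j
  simp only [Matrix.map_apply, Matrix.mul_apply, Matrix.add_apply, map_sum, Derivation.leibniz,
    smul_eq_mul, ← Finset.sum_add_distrib]
  exact Finset.sum_congr rfl fun k _ => by ring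

theorem map_derivation_list_prod [DecidableEq m] {α : Type*} (f : α → Matrix m m R) (w : List α) :
    ((w.map f).prod).map d = ∑ p : Fin w.length,
      ((w.take p).map f).prod * (f w[p]).map d * ((w.drop (p + 1)).map f).prod := by
  induction w with
  | nil =>
    ext i j
    by_cases h : i = j <;> simp [h]
  | cons a w ih =>
    rw [List.map_cons, List.prod_cons, map_derivation_mul, ih]
    refine Eq.trans ?_ (Fin.sum_univ_succ _).symm
    simp [Finset.mul_sum, mul_assoc]

theorem derivation_list_prod {α : Type*} (f : α → R) (L : List α) :
    d (L.map f).prod = ∑ i : Fin L.length, d (f L[i]) * ((L.eraseIdx i).map f).prod := by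
  induction L with
  | nil => simp
  | cons a L ih =>
    rw [List.map_cons, List.prod_cons, Derivation.leibniz, ih, add_comm]
    refine Eq.trans ?_ (Fin.sum_univ_succ _).symm
    simp [Finset.mul_sum, mul_assoc, mul_comm]

end Leibniz

section MatrixUnits

variable {m R : Type*} [Fintype m] [DecidableEq m] [CommRing R]

theorem mul_single_one_mul_apply (X Z : Matrix m m R) (u v i j : m) :
    (X * Matrix.single u v (1 : R) * Z) i j = X i u * Z v j := by
  simp [Matrix.mul_apply, Matrix.single, ite_and]

theorem sum_mul_single_mul_apply (X Z : Matrix m m R) :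
    ∑ u : m, ∑ v : m, (X * Matrix.single u v (1 : R) * Z) v u = trace (Xᵀ * Z) := by
  simp only [mul_single_one_mul_apply]
  simp only [trace, Matrix.diag_apply, Matrix.mul_apply,
    Matrix.transpose_apply]

theorem sum_mul_single_swap_mul_apply (X Z : Matrix m m R) :
    ∑ u : m, ∑ v : m, (X * Matrix.single v u (1 : R) * Z) v u = trace X * trace Z := by
  simp only [mul_single_one_mul_apply, trace, Matrix.diag_apply, Finset.sum_mul_sum]
  exact Finset.sum_comm

theorem trace_mul_single_one_mul (X Z : Matrix m m R) (u v : m) :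
    trace (X * Matrix.single u v (1 : R) * Z) = (Z * X) v u := by
  simp only [trace, Matrix.diag_apply, mul_single_one_mul_apply]
  simp only [Matrix.mul_apply, mul_comm]

theorem sum_mul_trace_mul_single_mul (M X Z : Matrix m m R) :
    ∑ u, ∑ v, M v u * trace (X * Matrix.single u v (1 : R) * Z) = trace (Mᵀ * (Z * X)) := by
  simp only [trace_mul_single_one_mul]
  simp only [trace, Matrix.diag_apply, Matrix.mul_apply (M := Mᵀ), Matrix.transpose_apply]

theorem sum_mul_trace_mul_single_swap_mul (M X Z : Matrix m m R) :
    ∑ u, ∑ v, M v u * trace (X * Matrix.single v u (1 : R) * Z) = trace (M * (Z * X)) := by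
  simp only [trace_mul_single_one_mul]
  simp only [trace, Matrix.diag_apply, Matrix.mul_apply (M := M)]
  exact Finset.sum_comm

end MatrixUnits

section CircularMoment

/-- The `*`-moment of a circular element of variance `ν` along a word, computed by pairing the
first letter with each letter of the opposite kind. These are the limits of the normalized traces
of words in a matrix with independent entries of variance `ν / n`. -/
noncomputable def circularMoment (ν : ℝ) : List Bool → ℝ
  | [] => 1
  | b :: w => ν * ∑ p : Fin w.length,
      if w[p] = b then 0 else circularMoment ν (w.take p) * circularMoment ν (w.drop (p + 1))
  termination_by w => w.length
  decreasing_by all_goals simp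

theorem circularMoment_replicate (ν : ℝ) (b : Bool) (q : ℕ) :
    circularMoment ν (List.replicate q b) = if q = 0 then 1 else 0 := by
  cases q with
  | zero => simp [circularMoment]
  | succ q =>
    rw [List.replicate_succ, circularMoment]
    simp

theorem circularMoment_replicate_append_replicate (ν : ℝ) (b : Bool) (p q : ℕ) :
    circularMoment ν (List.replicate p b ++ List.replicate q (!b)) =
      if p = q then ν ^ p else 0 := by
  induction p generalizing q with
  | zero => simpa [eq_comm] using circularMoment_replicate ν (!b) q
  | succ p ih =>
    rw [List.replicate_succ, List.cons_append, circularMoment]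
    cases q with
    | zero => simp
    | succ q =>
      set w := List.replicate p b ++ List.replicate (q + 1) (!b) with hw
      have length_w : w.length = p + q + 1 := by simp [hw]; omega
      have drop_w (j : ℕ) (hj : p ≤ j) : w.drop (j + 1) = List.replicate (p + q - j) (!b) := by
        rw [hw, List.drop_append, List.drop_replicate, List.drop_replicate,
          List.length_replicate, show p - (j + 1) = 0 by omega,
          show q + 1 - (j + 1 - p) = p + q - j by omega, List.replicate_zero, List.nil_append]
      have other_pairings (i : Fin w.length) (hi : i ≠ ⟨p + q, by omega⟩) :
          (if w[i] = b then 0 else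
            circularMoment ν (w.take i) * circularMoment ν (w.drop (i + 1))) = 0 := by
        rcases lt_or_ge (i : ℕ) p with hip | hip
        · exact if_pos (by simp [hw, hip])
        · have hlt : (i : ℕ) < p + q :=
            lt_of_le_of_ne (Nat.lt_succ_iff.1 (i.2.trans_eq length_w)) fun h => hi (Fin.ext h)
          rw [drop_w i hip, circularMoment_replicate, if_neg (show p + q - (i : ℕ) ≠ 0 by omega),
            mul_zero, ite_self]
      have take_last : w.take (p + q) = List.replicate p b ++ List.replicate q (!b) := by
        simp [hw, List.take_append]
      rw [Finset.sum_eq_single _ (fun i _ hi => other_pairings i hi) (by simp)]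
      simp only [take_last, drop_w (p + q) le_self_add, Nat.sub_self, List.replicate_zero, ih,
        circularMoment, mul_one]
      simp [hw, pow_succ']

end CircularMoment

section GaussianMean

theorem integrable_pow_gaussianReal (v : NNReal) (k : ℕ) :
    Integrable (fun x : ℝ => x ^ k) (gaussianReal 0 v) := by
  have h := (memLp_id_gaussianReal' (μ := 0) (v := v) k (by simp)).integrable_norm_pow'
  rw [← integrable_norm_iff (by fun_prop)]
  simpa using h

theorem hasDerivAt_gaussianPDFReal_zero (v : NNReal) (x : ℝ) :
    HasDerivAt (gaussianPDFReal 0 v) (-(x / v) * gaussianPDFReal 0 v x) x := by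
  simp only [gaussianPDFReal_def]
  have exponent : HasDerivAt (fun x : ℝ => -(x - 0) ^ 2 / (2 * (v : ℝ))) (-(x / v)) x := by
    refine ((((hasDerivAt_id x).sub_const 0).pow 2).neg.div_const (2 * (v : ℝ))).congr_deriv ?_
    simp only [id, Nat.cast_ofNat, sub_zero, Nat.add_one_sub_one, pow_one]
    field_simp
  exact (exponent.exp.const_mul (Real.sqrt (2 * Real.pi * v))⁻¹).congr_deriv (by ring)

theorem integral_pow_succ_gaussianReal (v : NNReal) (k : ℕ) :
    ∫ x, x ^ (k + 1) ∂gaussianReal 0 v = v * (k * ∫ x, x ^ (k - 1) ∂gaussianReal 0 v) := by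
  rcases eq_or_ne v 0 with rfl | hv
  · simp
  have hv' : (v : ℝ) ≠ 0 := by exact_mod_cast hv
  have integrable_pow_mul (k : ℕ) : Integrable fun x : ℝ => x ^ k * gaussianPDFReal 0 v x := by
    have := integrable_pow_gaussianReal v k
    rw [gaussianReal_of_var_ne_zero _ hv, integrable_withDensity_iff_integrable_smul₀'
      (measurable_gaussianPDF _ _).aemeasurable (by simp [gaussianPDF])] at this
    simpa [toReal_gaussianPDF, mul_comm] using this
  have by_parts := integral_mul_deriv_eq_deriv_mul_of_integrable (u := fun x : ℝ => x ^ k)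
    (u' := fun x => k * x ^ (k - 1))
    (fun x _ => hasDerivAt_pow k x) (fun x _ => hasDerivAt_gaussianPDFReal_zero v x)
    (((integrable_pow_mul (k + 1)).const_mul (-(v : ℝ)⁻¹)).congr (.of_forall fun x => by
      simp only [Pi.mul_apply]; ring))
    (((integrable_pow_mul (k - 1)).const_mul (k : ℝ)).congr (.of_forall fun x => by
      simp only [Pi.mul_apply]; ring))
    (integrable_pow_mul k)
  have lhs (x : ℝ) : x ^ k * (-(x / v) * gaussianPDFReal 0 v x) =
      -(v : ℝ)⁻¹ * (gaussianPDFReal 0 v x * x ^ (k + 1)) := by ring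
  have rhs (x : ℝ) : k * x ^ (k - 1) * gaussianPDFReal 0 v x =
      k * (gaussianPDFReal 0 v x * x ^ (k - 1)) := by ring
  simp only [lhs, rhs, integral_const_mul] at by_parts
  simp only [integral_gaussianReal_eq_integral_smul hv, smul_eq_mul]
  field_simp at by_parts
  linarith

variable {ι : Type*} [Fintype ι]

/-- The law of a family of independent centred Gaussian variables with variances `v`. -/
noncomputable abbrev gaussianFamily (v : ι → NNReal) : Measure (ι → ℝ) :=
  Measure.pi fun i => gaussianReal 0 (v i)

theorem eval_monomial_fintype (z : ι → ℝ) (k : ι →₀ ℕ) (a : ℝ) :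
    MvPolynomial.eval z (MvPolynomial.monomial k a) = a * ∏ i, z i ^ k i := by
  rw [MvPolynomial.eval_monomial, Finsupp.prod_fintype _ _ fun i => pow_zero (z i)]

theorem integrable_eval_gaussianFamily (v : ι → NNReal) (p : MvPolynomial ι ℝ) :
    Integrable (fun z => MvPolynomial.eval z p) (gaussianFamily v) := by
  induction p using MvPolynomial.induction_on' with
  | monomial k a =>
    simp only [eval_monomial_fintype]
    exact (Integrable.fintype_prod fun i => integrable_pow_gaussianReal (v i) (k i)).const_mul a
  | add p q hp hq =>
    simp only [map_add]
    exact hp.add hq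

/-- The expectation of a polynomial in independent centred Gaussian variables with variances
`v`, as a linear functional on symbolic polynomials. -/
noncomputable def gaussianMean (v : ι → NNReal) : MvPolynomial ι ℝ →ₗ[ℝ] ℝ where
  toFun p := ∫ z, MvPolynomial.eval z p ∂gaussianFamily v
  map_add' p q := by
    simp only [map_add]
    exact integral_add (integrable_eval_gaussianFamily v p) (integrable_eval_gaussianFamily v q)
  map_smul' c p := by
    simp only [MvPolynomial.smul_eval, RingHom.id_apply, smul_eq_mul]
    exact integral_const_mul _ _

theorem gaussianMean_apply (v : ι → NNReal) (p : MvPolynomial ι ℝ) :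
    gaussianMean v p = ∫ z, MvPolynomial.eval z p ∂gaussianFamily v := rfl

theorem gaussianMean_one (v : ι → NNReal) : gaussianMean v 1 = 1 := by
  simp [gaussianMean_apply]

theorem gaussianMean_monomial (v : ι → NNReal) (k : ι →₀ ℕ) (a : ℝ) :
    gaussianMean v (MvPolynomial.monomial k a) =
      a * ∏ i, ∫ x, x ^ k i ∂gaussianReal 0 (v i) := by
  simp only [gaussianMean_apply, eval_monomial_fintype]
  rw [integral_const_mul, integral_fintype_prod_eq_prod fun i x => x ^ k i]

/-- Stein's lemma. -/
theorem gaussianMean_X_mul (v : ι → NNReal) (i : ι) (p : MvPolynomial ι ℝ) :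
    gaussianMean v (MvPolynomial.X i * p) = v i * gaussianMean v (MvPolynomial.pderiv i p) := by
  classical
  induction p using MvPolynomial.induction_on' with
  | monomial k a =>
    have other_factors : ∏ j ∈ Finset.univ.erase i, (∫ x, x ^ (Finsupp.single i 1 + k : ι →₀ ℕ) j
          ∂gaussianReal 0 (v j)) =
        ∏ j ∈ Finset.univ.erase i, ∫ x, x ^ (k - Finsupp.single i 1 : ι →₀ ℕ) j
          ∂gaussianReal 0 (v j) :=
      Finset.prod_congr rfl fun j hj => by simp [(Finset.ne_of_mem_erase hj).symm]
    have ith_factor : ∫ x, x ^ (Finsupp.single i 1 + k : ι →₀ ℕ) i ∂gaussianReal 0 (v i) =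
        v i * (k i * ∫ x, x ^ (k - Finsupp.single i 1 : ι →₀ ℕ) i ∂gaussianReal 0 (v i)) := by
      simpa [add_comm] using integral_pow_succ_gaussianReal (v i) (k i)
    rw [MvPolynomial.pderiv_monomial, MvPolynomial.X, MvPolynomial.monomial_mul,
      gaussianMean_monomial, gaussianMean_monomial, ← Finset.mul_prod_erase _ _ (Finset.mem_univ i),
      ← Finset.mul_prod_erase _ (fun j => ∫ x, x ^ (k - Finsupp.single i 1 : ι →₀ ℕ) j
        ∂gaussianReal 0 (v j)) (Finset.mem_univ i), other_factors, ith_factor]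
    ring
  | add p q hp hq => rw [mul_add, map_add, map_add, map_add, hp, hq, mul_add]

end GaussianMean

section Normalized

variable {n : ℕ} {K R : Type*} [CommRing R] [Algebra ℝ R]

/-- The normalized trace `n⁻¹ tr w(A)` of a word. -/
noncomputable def wordTrace (A : Matrix (Fin n) (Fin n) R) (w : List Bool) : R :=
  (n : ℝ)⁻¹ • trace (word A w)

/-- The normalized Gram matrix `n⁻¹ Yᵀ w(A) Y` of a word. -/
noncomputable def wordGram (A : Matrix (Fin n) (Fin n) R) (Y : Matrix (Fin n) K R)
    (w : List Bool) : Matrix K K R :=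
  (n : ℝ)⁻¹ • (Yᵀ * word A w * Y)

/-- The normalized trace of a word minus its limit. -/
noncomputable def centredTrace (ν : ℝ) (A : Matrix (Fin n) (Fin n) R) (w : List Bool) : R :=
  wordTrace A w - algebraMap ℝ R (circularMoment ν w)

/-- The entry `(k, l)` of a Gram matrix of a word, minus its mean over `Y` when the columns of `Y`
have independent centred entries of variances `μ`. -/
noncomputable def centredGram [DecidableEq K] (μ : K → NNReal) (A : Matrix (Fin n) (Fin n) R)
    (Y : Matrix (Fin n) K R) (c : K × List Bool × K) : R :=
  wordGram A Y c.2.1 c.1 c.2.2 - (if c.1 = c.2.2 then (μ c.1 : ℝ) else 0) • wordTrace A c.2.1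

variable {S : Type*} [CommRing S] [Algebra ℝ S] (f : R →ₐ[ℝ] S)
  (A : Matrix (Fin n) (Fin n) R) (Y : Matrix (Fin n) K R)

theorem map_wordTrace (w : List Bool) : f (wordTrace A w) = wordTrace (A.map f) w := by
  have map_word : (word A w).map f = word (A.map f) w := word_map (f : R →+* S) A w
  rw [wordTrace, wordTrace, map_smul, ← map_word]
  simp only [trace, map_sum, Matrix.diag_apply, Matrix.map_apply]

theorem map_wordGram_apply (w : List Bool) (k l : K) :
    f (wordGram A Y w k l) = wordGram (A.map f) (Y.map f) w k l := by
  have map_word : (word A w).map f = word (A.map f) w := word_map (f : R →+* S) A w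
  simp only [wordGram, Matrix.smul_apply, map_smul, ← map_word, Matrix.mul_apply, map_sum, map_mul,
    Matrix.map_apply, Matrix.transpose_apply]

theorem map_centredTrace (ν : ℝ) (w : List Bool) :
    f (centredTrace ν A w) = centredTrace ν (A.map f) w := by
  rw [centredTrace, map_sub, map_wordTrace, AlgHom.commutes, centredTrace]

theorem map_centredGram [DecidableEq K] (μ : K → NNReal) (c : K × List Bool × K) :
    f (centredGram μ A Y c) = centredGram μ (A.map f) (Y.map f) c := by
  rw [centredGram, map_sub, map_wordGram_apply, map_smul, map_wordTrace, centredGram]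

theorem wordTrace_eq_centredTrace_add (ν : ℝ) (w : List Bool) :
    wordTrace A w = centredTrace ν A w + algebraMap ℝ R (circularMoment ν w) := by
  rw [centredTrace, sub_add_cancel]

theorem centredTrace_nil [NeZero n] (ν : ℝ) : centredTrace ν A [] = 0 := by
  rw [centredTrace, wordTrace, circularMoment, word_nil, trace_one, Fintype.card_fin,
    ← map_natCast (algebraMap ℝ R), Algebra.smul_def, ← map_mul,
    inv_mul_cancel₀ (NeZero.ne (n : ℝ)), sub_self]

end Normalized

section GenericMatrices

variable {n : ℕ} {K : Type*}

/-- Labels of the entries of an `n × n` matrix and of an `n × K` matrix. -/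
abbrev EntryIndex (n : ℕ) (K : Type*) : Type _ := (Fin n × Fin n) ⊕ (Fin n × K)

/-- Polynomials in the entries of a generic pair of matrices. -/
abbrev EntryPoly (n : ℕ) (K : Type*) : Type _ := MvPolynomial (EntryIndex n K) ℝ

/-- The generic square matrix, whose entries are independent variables. -/
noncomputable def genericA (n : ℕ) (K : Type*) : Matrix (Fin n) (Fin n) (EntryPoly n K) :=
  Matrix.of fun i j => MvPolynomial.X (Sum.inl (i, j))

/-- The generic matrix with columns indexed by `K`, independent of `genericA`. -/
noncomputable def genericY (n : ℕ) (K : Type*) : Matrix (Fin n) K (EntryPoly n K) :=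
  Matrix.of fun i k => MvPolynomial.X (Sum.inr (i, k))

/-- The variances of the entries: `ν / n` for the square matrix and `μ k` for column `k` of the
other one. -/
noncomputable def entryVariance (n : ℕ) (ν : NNReal) (μ : K → NNReal) : EntryIndex n K → NNReal :=
  Sum.elim (fun _ => ν / n) fun p => μ p.2

/-- Expectation over Gaussian matrices of variance profile `entryVariance`. -/
noncomputable abbrev matrixMean [Fintype K] (n : ℕ) (ν : NNReal) (μ : K → NNReal) :
    EntryPoly n K →ₗ[ℝ] ℝ :=
  gaussianMean (entryVariance n ν μ)

/-- The derivation with respect to the entry `(u, v)` of the letter `b`. -/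
noncomputable def letterDeriv (b : Bool) (u v : Fin n) :
    Derivation ℝ (EntryPoly n K) (EntryPoly n K) :=
  MvPolynomial.pderiv (Sum.inl (if b then (u, v) else (v, u)))

/-- The derivation with respect to the entry `(u, k)` of the generic matrix `Y`. -/
noncomputable def columnDeriv (u : Fin n) (k : K) : Derivation ℝ (EntryPoly n K) (EntryPoly n K) :=
  MvPolynomial.pderiv (Sum.inr (u, k))

theorem map_letterDeriv_letter (b b' : Bool) (u v : Fin n) :
    (letter (genericA n K) b').map (letterDeriv b u v) =
      if b' = b then Matrix.single u v 1 else Matrix.single v u 1 := by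
  classical
  ext i j
  cases b <;> cases b' <;>
    simp [letter, genericA, letterDeriv, MvPolynomial.pderiv_X, Matrix.single, Pi.single_apply,
      eq_comm, and_comm]

theorem map_columnDeriv_letter (b : Bool) (u : Fin n) (k : K) :
    (letter (genericA n K) b).map (columnDeriv u k) = 0 := by
  classical
  ext i j
  cases b <;> simp [letter, genericA, columnDeriv, MvPolynomial.pderiv_X]

theorem columnDeriv_genericY [DecidableEq K] (u i : Fin n) (k l : K) :
    columnDeriv u k (genericY n K i l) = if i = u ∧ l = k then 1 else 0 := by
  simp [genericY, columnDeriv, MvPolynomial.pderiv_X, Pi.single_apply, eq_comm]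

variable [Fintype K] (ν : NNReal) (μ : K → NNReal)

theorem matrixMean_letter_mul (b : Bool) (u v : Fin n) (P : EntryPoly n K) :
    matrixMean n ν μ (letter (genericA n K) b u v * P) =
      ν / n * matrixMean n ν μ (letterDeriv b u v P) := by
  have variance (p : Fin n × Fin n) : (entryVariance n ν μ (Sum.inl p) : ℝ) = ν / n := by
    simp [entryVariance]
  cases b <;> exact (gaussianMean_X_mul _ _ P).trans (by rw [variance]; rfl)

theorem matrixMean_genericY_mul (u : Fin n) (k : K) (P : EntryPoly n K) :
    matrixMean n ν μ (genericY n K u k * P) = μ k * matrixMean n ν μ (columnDeriv u k P) :=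
  gaussianMean_X_mul _ _ P

end GenericMatrices

section LoopEquations

variable {n : ℕ} {K : Type*}

theorem map_letterDeriv_word (b : Bool) (u v : Fin n) (w : List Bool) :
    (word (genericA n K) w).map (letterDeriv b u v) = ∑ p : Fin w.length,
      word (genericA n K) (w.take p) *
        (if w[p] = b then Matrix.single u v 1 else Matrix.single v u 1) *
          word (genericA n K) (w.drop (p + 1)) := by
  simp only [word, map_derivation_list_prod, map_letterDeriv_letter]

theorem sum_letterDeriv_word (b : Bool) (w : List Bool) :
    ∑ u, ∑ v, letterDeriv b u v (word (genericA n K) w v u) = ∑ p : Fin w.length,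
      if w[p] = b then trace (word (genericA n K) (wordStar (w.take p) ++ w.drop (p + 1)))
      else
        trace (word (genericA n K) (w.take p)) * trace (word (genericA n K) (w.drop (p + 1))) := by
  have entry (u v : Fin n) := congrFun₂ (map_letterDeriv_word (K := K) b u v w) v u
  simp only [Matrix.map_apply, Matrix.sum_apply] at entry
  simp only [entry, Finset.sum_comm (t := (Finset.univ : Finset (Fin w.length)))]
  refine Finset.sum_congr rfl fun p _ => ?_
  split
  · rw [sum_mul_single_mul_apply, word_append, word_wordStar]
  · rw [sum_mul_single_swap_mul_apply]

theorem letterDeriv_wordTrace (b : Bool) (u v : Fin n) (w : List Bool) :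
    letterDeriv b u v (wordTrace (genericA n K) w) =
      (n : ℝ)⁻¹ • trace ((word (genericA n K) w).map (letterDeriv b u v)) := by
  simp only [wordTrace, Derivation.map_smul, trace, map_sum, Matrix.diag_apply, Matrix.map_apply]

/-- The word left after contracting the letter `b` in front of `w` with the `q`-th letter of the
cyclic word `w'`. -/
def mergeWords (b : Bool) (w w' : List Bool) (q : Fin w'.length) : List Bool :=
  (if w'[q] = b then wordStar w else w) ++ (w'.drop (q + 1) ++ w'.take q)

theorem length_mergeWords (b : Bool) (w w' : List Bool) (q : Fin w'.length) :
    (mergeWords b w w' q).length + 1 = w.length + w'.length := by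
  rw [mergeWords, List.length_append, apply_ite List.length, length_wordStar, ite_self,
    List.length_append, List.length_drop, List.length_take]
  omega

theorem sum_word_mul_letterDeriv_wordTrace (b : Bool) (w w' : List Bool) :
    ∑ u, ∑ v, word (genericA n K) w v u * letterDeriv b u v (wordTrace (genericA n K) w') =
      ∑ q, wordTrace (genericA n K) (mergeWords b w w' q) := by
  simp only [letterDeriv_wordTrace, map_letterDeriv_word, trace_sum, Finset.smul_sum,
    Finset.mul_sum, mul_smul_comm,
    Finset.sum_comm (t := (Finset.univ : Finset (Fin w'.length)))]
  refine Finset.sum_congr rfl fun q _ => ?_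
  simp only [← Finset.smul_sum, wordTrace, mergeWords]
  split
  · rw [sum_mul_trace_mul_single_mul, word_append, word_append, word_wordStar]
  · rw [sum_mul_trace_mul_single_swap_mul, word_append, word_append]

theorem sum_word_mul_letterDeriv_prod (ν : ℝ) (b : Bool) (w : List Bool) (L : List (List Bool)) :
    ∑ u, ∑ v, word (genericA n K) w v u *
        letterDeriv b u v (L.map (centredTrace ν (genericA n K))).prod =
      ∑ i : Fin L.length, ∑ q, wordTrace (genericA n K) (mergeWords b w L[i] q) *
        ((L.eraseIdx i).map (centredTrace ν (genericA n K))).prod := by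
  simp only [derivation_list_prod, Finset.mul_sum,
    Finset.sum_comm (t := (Finset.univ : Finset (Fin L.length)))]
  refine Finset.sum_congr rfl fun i _ => ?_
  rw [← Finset.sum_mul, ← sum_word_mul_letterDeriv_wordTrace]
  simp only [Finset.sum_mul, mul_assoc, centredTrace, map_sub, Derivation.map_algebraMap, sub_zero]

/-- The contribution to the loop equation of `b :: w` of the pairing of `b` with `w[p]`. -/
noncomputable def loopTerm (ν : ℝ) (b : Bool) (w : List Bool) (p : Fin w.length) : EntryPoly n K :=
  if w[p] = b then (n : ℝ)⁻¹ • wordTrace (genericA n K) (wordStar (w.take p) ++ w.drop (p + 1))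
  else centredTrace ν (genericA n K) (w.take p) * wordTrace (genericA n K) (w.drop (p + 1)) +
    circularMoment ν (w.take p) • centredTrace ν (genericA n K) (w.drop (p + 1))

theorem smul_sum_letterDeriv_word_sub_circularMoment (ν : ℝ) (b : Bool) (w : List Bool) :
    (ν * (n : ℝ)⁻¹ ^ 2) • ∑ u, ∑ v, letterDeriv b u v (word (genericA n K) w v u) -
      algebraMap ℝ (EntryPoly n K) (circularMoment ν (b :: w)) =
    ν • ∑ p, loopTerm ν b w p := by
  rw [sum_letterDeriv_word, circularMoment, map_mul, ← Algebra.smul_def, mul_smul, ← smul_sub,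
    map_sum, Finset.smul_sum, ← Finset.sum_sub_distrib]
  congr 1
  refine Finset.sum_congr rfl fun p _ => ?_
  unfold loopTerm
  split
  · rw [map_zero, sub_zero, pow_two, mul_smul, wordTrace]
  · simp only [centredTrace, wordTrace, Algebra.smul_def, map_mul, pow_two]
    ring

variable [Fintype K] (ν : NNReal) (μ : K → NNReal)

theorem matrixMean_wordTrace_cons (b : Bool) (w : List Bool) (P : EntryPoly n K) :
    matrixMean n ν μ (wordTrace (genericA n K) (b :: w) * P) =
      matrixMean n ν μ (((ν : ℝ) * (n : ℝ)⁻¹ ^ 2) •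
        ∑ u, ∑ v, letterDeriv b u v (word (genericA n K) w v u * P)) := by
  simp only [wordTrace, trace, word_cons, Matrix.diag_apply, Matrix.mul_apply, smul_mul_assoc,
    Finset.sum_mul, mul_assoc, map_smul, map_sum, matrixMean_letter_mul, smul_eq_mul,
    Finset.mul_sum]
  exact Finset.sum_congr rfl fun u _ => Finset.sum_congr rfl fun v _ => by ring

/-- The loop equation: Stein's lemma applied to the first letter of a centred trace. -/
theorem matrixMean_centredTrace_cons (b : Bool) (w : List Bool) (P : EntryPoly n K) :
    matrixMean n ν μ (centredTrace ν (genericA n K) (b :: w) * P) =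
      matrixMean n ν μ ((ν : ℝ) • ∑ p, loopTerm ν b w p * P +
        ((ν : ℝ) * (n : ℝ)⁻¹ ^ 2) • ∑ u, ∑ v, word (genericA n K) w v u * letterDeriv b u v P) := by
  rw [centredTrace, sub_mul, map_sub, matrixMean_wordTrace_cons, ← map_sub, ← Finset.sum_mul,
    ← smul_mul_assoc, ← smul_sum_letterDeriv_word_sub_circularMoment]
  congr 1
  simp only [Derivation.leibniz, smul_eq_mul, Finset.sum_add_distrib, mul_comm P, ← Finset.sum_mul]
  rw [smul_add, sub_mul, smul_mul_assoc]
  ring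

end LoopEquations

section ColumnDerivatives

variable {n : ℕ} {K : Type*}

theorem map_columnDeriv_word (u : Fin n) (k : K) (w : List Bool) :
    (word (genericA n K) w).map (columnDeriv u k) = 0 := by
  simp only [word, map_derivation_list_prod, map_columnDeriv_letter, mul_zero, zero_mul,
    Finset.sum_const_zero]

theorem columnDeriv_wordTrace (u : Fin n) (k : K) (w : List Bool) :
    columnDeriv u k (wordTrace (genericA n K) w) = 0 := by
  have entry (i : Fin n) := congrFun₂ (map_columnDeriv_word u k w) i i
  simp only [Matrix.map_apply, Matrix.zero_apply] at entry
  simp only [wordTrace, Derivation.map_smul, trace, map_sum, Matrix.diag_apply, entry,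
    Finset.sum_const_zero, smul_zero]

theorem columnDeriv_prod_wordTrace (u : Fin n) (k : K) (U : List (List Bool)) :
    columnDeriv u k (U.map (wordTrace (genericA n K))).prod = 0 := by
  simp only [derivation_list_prod, columnDeriv_wordTrace, zero_mul, Finset.sum_const_zero]

variable [DecidableEq K]

theorem columnDeriv_word_mul_genericY (u i : Fin n) (k l : K) (w : List Bool) :
    columnDeriv u k ((word (genericA n K) w * genericY n K) i l) =
      if l = k then word (genericA n K) w i u else 0 := by
  have entry : columnDeriv u k ((word (genericA n K) w * genericY n K) i l) =
      (word (genericA n K) w * (genericY n K).map (columnDeriv u k)) i l := by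
    have := congrFun₂ (map_derivation_mul (columnDeriv u k) (word (genericA n K) w)
      (genericY n K)) i l
    rwa [map_columnDeriv_word, Matrix.zero_mul, zero_add] at this
  rw [entry, Matrix.mul_apply]
  by_cases h : l = k <;> simp [columnDeriv_genericY, h]

theorem columnDeriv_wordGram (u : Fin n) (k k' l' : K) (w : List Bool) :
    columnDeriv u k (wordGram (genericA n K) (genericY n K) w k' l') =
      (n : ℝ)⁻¹ • ((if k' = k then (word (genericA n K) w * genericY n K) u l' else 0) +
        if l' = k then ((genericY n K)ᵀ * word (genericA n K) w) k' u else 0) := by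
  simp only [wordGram, Matrix.smul_apply, Derivation.map_smul, Matrix.mul_assoc]
  rw [Matrix.mul_apply]
  simp only [map_sum, Derivation.leibniz, columnDeriv_word_mul_genericY, Matrix.transpose_apply,
    columnDeriv_genericY, smul_eq_mul, Finset.sum_add_distrib]
  rw [add_comm]
  congr 2
  · by_cases h : k' = k <;> simp [h]
  · by_cases h : l' = k <;> simp [h, Matrix.mul_apply]

theorem sum_mul_columnDeriv_centredGram (μ : K → NNReal) (k : K) (w : List Bool) (l : K)
    (c : K × List Bool × K) :
    ∑ a, (word (genericA n K) w * genericY n K) a l *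
        columnDeriv a k (centredGram μ (genericA n K) (genericY n K) c) =
      (if c.1 = k then wordGram (genericA n K) (genericY n K) (wordStar w ++ c.2.1) l c.2.2
        else 0) +
        if c.2.2 = k then wordGram (genericA n K) (genericY n K) (c.2.1 ++ w) c.1 l else 0 := by
  simp only [centredGram, map_sub, Derivation.map_smul, columnDeriv_wordTrace, smul_zero, sub_zero,
    columnDeriv_wordGram, mul_smul_comm, mul_add, smul_add, Finset.sum_add_distrib,
    ← Finset.smul_sum]
  congr 1
  · split
    · rw [wordGram, word_append, word_wordStar, Matrix.smul_apply, ← Matrix.mul_assoc,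
        ← Matrix.transpose_mul, Matrix.mul_assoc, Matrix.mul_apply]
      rfl
    · simp only [mul_zero, Finset.sum_const_zero, smul_zero]
  · split
    · rw [wordGram, word_append, Matrix.smul_apply, ← Matrix.mul_assoc, Matrix.mul_assoc,
        Matrix.mul_apply]
      simp only [mul_comm]
    · simp only [mul_zero, Finset.sum_const_zero, smul_zero]

theorem sum_mul_columnDeriv_prod (μ : K → NNReal) (k : K) (w : List Bool) (l : K)
    (L : List (K × List Bool × K)) (U : List (List Bool)) :
    ∑ a, (word (genericA n K) w * genericY n K) a l *
        columnDeriv a k ((L.map (centredGram μ (genericA n K) (genericY n K))).prod *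
          (U.map (wordTrace (genericA n K))).prod) =
      ∑ i : Fin L.length,
        ((if L[i].1 = k then
            wordGram (genericA n K) (genericY n K) (wordStar w ++ L[i].2.1) l L[i].2.2 else 0) +
          if L[i].2.2 = k then
            wordGram (genericA n K) (genericY n K) (L[i].2.1 ++ w) L[i].1 l else 0) *
        (((L.eraseIdx i).map (centredGram μ (genericA n K) (genericY n K))).prod *
          (U.map (wordTrace (genericA n K))).prod) := by
  simp only [Derivation.leibniz _ (L.map _).prod, columnDeriv_prod_wordTrace, smul_zero, zero_add]
  simp only [← sum_mul_columnDeriv_centredGram μ, derivation_list_prod, smul_eq_mul,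
    Finset.mul_sum, Finset.sum_mul]
  rw [Finset.sum_comm]
  exact Finset.sum_congr rfl fun i _ => Finset.sum_congr rfl fun a _ => by ring

/-- Stein's lemma applied to the left factor `Yᵀ` of a centred Gram matrix. -/
theorem matrixMean_centredGram [Fintype K] (ν : NNReal) (μ : K → NNReal) (k : K) (w : List Bool)
    (l : K) (P : EntryPoly n K) :
    matrixMean n ν μ (centredGram μ (genericA n K) (genericY n K) (k, w, l) * P) =
      matrixMean n ν μ (((μ k : ℝ) * (n : ℝ)⁻¹) •
        ∑ a, (word (genericA n K) w * genericY n K) a l * columnDeriv a k P) := by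
  have gram : wordGram (genericA n K) (genericY n K) w k l * P =
      (n : ℝ)⁻¹ • ∑ a, genericY n K a k * ((word (genericA n K) w * genericY n K) a l * P) := by
    simp only [wordGram, Matrix.smul_apply, Matrix.mul_assoc,
      Matrix.mul_apply (M := (genericY n K)ᵀ), Matrix.transpose_apply, smul_mul_assoc,
      Finset.sum_mul, mul_assoc]
  have diagonal_term : ∑ a, columnDeriv a k ((word (genericA n K) w * genericY n K) a l) * P =
      if k = l then trace (word (genericA n K) w) * P else 0 := by
    by_cases h : k = l <;>
      simp [columnDeriv_word_mul_genericY, h, trace, Finset.sum_mul, eq_comm]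
  have stein : matrixMean n ν μ (wordGram (genericA n K) (genericY n K) w k l * P) =
      matrixMean n ν μ (((μ k : ℝ) * (n : ℝ)⁻¹) • ∑ a,
        (columnDeriv a k ((word (genericA n K) w * genericY n K) a l) * P +
          (word (genericA n K) w * genericY n K) a l * columnDeriv a k P)) := by
    simp only [gram, map_smul, map_sum, matrixMean_genericY_mul, Derivation.leibniz, smul_eq_mul,
      Finset.mul_sum, mul_assoc, mul_left_comm (μ k : ℝ), add_comm, mul_comm P]
  rw [centredGram, sub_mul, map_sub, stein, ← map_sub, Finset.sum_add_distrib, diagonal_term]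
  congr 1
  by_cases h : k = l <;> simp [h, wordTrace, smul_smul]

end ColumnDerivatives

section Decay

open Asymptotics

variable {K : Type*} [Fintype K]

/-- The mean of a sequence of polynomials in the entries of the random matrices is `O(n⁻ʳ)`. -/
def HasDecay (ν : NNReal) (μ : K → NNReal) (p : (n : ℕ) → EntryPoly n K) (r : ℕ) : Prop :=
  (fun n => matrixMean n ν μ (p n)) =O[atTop] fun n => (n : ℝ)⁻¹ ^ r

namespace HasDecay

variable {ν : NNReal} {μ : K → NNReal} {p q : (n : ℕ) → EntryPoly n K} {r s : ℕ}

theorem congr (hp : HasDecay ν μ p r)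
    (h : ∀ᶠ n in atTop, matrixMean n ν μ (p n) = matrixMean n ν μ (q n)) : HasDecay ν μ q r :=
  IsBigO.congr' hp h .rfl

theorem mono (hp : HasDecay ν μ p s) (h : r ≤ s) : HasDecay ν μ p r := by
  refine IsBigO.trans hp (IsBigO.of_norm_eventuallyLE ?_)
  filter_upwards [eventually_ge_atTop 1] with n hn
  rw [Real.norm_of_nonneg (by positivity)]
  exact pow_le_pow_of_le_one (by positivity) (inv_le_one_of_one_le₀ (by exact_mod_cast hn)) h

theorem add (hp : HasDecay ν μ p r) (hq : HasDecay ν μ q r) :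
    HasDecay ν μ (fun n => p n + q n) r := by
  simpa only [HasDecay, map_add] using IsBigO.add hp hq

theorem sum {ι : Type*} [Fintype ι] {p : ι → (n : ℕ) → EntryPoly n K}
    (hp : ∀ i, HasDecay ν μ (p i) r) : HasDecay ν μ (fun n => ∑ i, p i n) r := by
  simpa only [HasDecay, map_sum] using
    IsBigO.fun_sum (s := Finset.univ) fun i _ => hp i

theorem const_smul (hp : HasDecay ν μ p r) (c : ℝ) : HasDecay ν μ (fun n => c • p n) r := by
  simpa only [HasDecay, map_smul, smul_eq_mul] using IsBigO.const_mul_left hp c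

theorem inv_smul (hp : HasDecay ν μ p r) : HasDecay ν μ (fun n => (n : ℝ)⁻¹ • p n) (r + 1) := by
  simpa only [HasDecay, map_smul, smul_eq_mul, pow_succ'] using
    (isBigO_refl (fun n : ℕ => (n : ℝ)⁻¹) atTop).mul hp

theorem wordTrace_mul {w : List Bool}
    (hcentred : HasDecay ν μ (fun n => centredTrace ν (genericA n K) w * p n) r)
    (hp : HasDecay ν μ p r) : HasDecay ν μ (fun n => wordTrace (genericA n K) w * p n) r := by
  simpa only [wordTrace_eq_centredTrace_add (ν := (ν : ℝ)), add_mul, ← Algebra.smul_def] using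
    hcentred.add (hp.const_smul (circularMoment ν w))

theorem wordGram_mul [DecidableEq K] {k l : K} {w : List Bool}
    (hcentred : HasDecay ν μ
      (fun n => centredGram μ (genericA n K) (genericY n K) (k, w, l) * p n) r)
    (htrace : HasDecay ν μ (fun n => wordTrace (genericA n K) w * p n) r) :
    HasDecay ν μ (fun n => wordGram (genericA n K) (genericY n K) w k l * p n) r := by
  simpa only [centredGram, sub_mul, smul_mul_assoc, sub_add_cancel] using
    hcentred.add (htrace.const_smul (if k = l then (μ k : ℝ) else 0))

end HasDecay

theorem sum_map_eraseIdx_add {α : Type*} (f : α → ℕ) (L : List α) (i : Fin L.length) :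
    ((L.eraseIdx i).map f).sum + f L[i] = (L.map f).sum := by
  rw [add_comm, ← List.sum_cons, ← List.map_cons]
  exact ((List.getElem_cons_eraseIdx_perm i.isLt).map f).sum_eq

section Traces

variable {ν : NNReal} {μ : K → NNReal} {w : List Bool} {L : List (List Bool)}

theorem hasDecay_loopTerm_mul (b : Bool)
    (ih : ∀ L' : List (List Bool), (L'.map List.length).sum ≤ w.length + (L.map List.length).sum →
      HasDecay ν μ (fun n => (L'.map (centredTrace ν (genericA n K))).prod) L'.length)
    (p : Fin w.length) :
    HasDecay ν μ (fun n => loopTerm ν b w p * (L.map (centredTrace ν (genericA n K))).prod)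
      (L.length + 1) := by
  have tail := ih L (Nat.le_add_left _ _)
  have cons (v : List Bool) (hv : v.length ≤ w.length) : HasDecay ν μ (fun n =>
      centredTrace ν (genericA n K) v * (L.map (centredTrace ν (genericA n K))).prod)
      (L.length + 1) :=
    ih (v :: L) (Nat.add_le_add_right hv _)
  have length_take_add_drop : (w.take p).length + (w.drop (p + 1)).length ≤ w.length := by
    rw [List.length_take, List.length_drop]
    omega
  unfold loopTerm
  split
  · simp only [smul_mul_assoc]
    refine HasDecay.inv_smul (.wordTrace_mul ((cons _ ?_).mono (Nat.le_succ _)) tail)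
    rwa [List.length_append, length_wordStar]
  · simp only [add_mul, smul_mul_assoc, mul_assoc, mul_left_comm (centredTrace _ _ (w.take p))]
    have take := cons (w.take p) (by omega)
    have drop := cons (w.drop (p + 1)) (by omega)
    refine .add (.wordTrace_mul ?_ take) (drop.const_smul _)
    refine (ih (w.drop (p + 1) :: w.take p :: L) ?_).mono (Nat.le_succ _)
    simp only [List.map_cons, List.sum_cons]
    omega

theorem hasDecay_wordTrace_mergeWords_mul (b : Bool)
    (ih : ∀ L' : List (List Bool), (L'.map List.length).sum ≤ w.length + (L.map List.length).sum →
      HasDecay ν μ (fun n => (L'.map (centredTrace ν (genericA n K))).prod) L'.length)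
    (i : Fin L.length) (q : Fin L[i].length) :
    HasDecay ν μ (fun n => (n : ℝ)⁻¹ ^ 2 • (wordTrace (genericA n K) (mergeWords b w L[i] q) *
      ((L.eraseIdx i).map (centredTrace ν (genericA n K))).prod)) (L.length + 1) := by
  have total := sum_map_eraseIdx_add List.length L i
  have merged := length_mergeWords b w L[i] q
  simp only [pow_two, mul_smul, ← List.length_eraseIdx_add_one i.isLt]
  refine .inv_smul (.inv_smul (.wordTrace_mul ?_ (ih _ (by omega))))
  refine (ih (mergeWords b w L[i] q :: L.eraseIdx i) ?_).mono (Nat.le_succ _)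
  rw [List.map_cons, List.sum_cons]
  omega

theorem hasDecay_prod_centredTrace (ν : NNReal) (μ : K → NNReal) (L : List (List Bool)) :
    HasDecay ν μ (fun n => (L.map (centredTrace ν (genericA n K))).prod) L.length := by
  induction h : (L.map List.length).sum using Nat.strong_induction_on generalizing L with
  | _ N ih =>
  rcases L with _ | ⟨_ | ⟨b, w⟩, L⟩
  · simpa only [HasDecay, List.map_nil, List.prod_nil, gaussianMean_one, List.length_nil, pow_zero]
      using isBigO_refl _ _
  · refine IsBigO.congr' (isBigO_zero _ _) ?_ .rfl
    filter_upwards [eventually_ne_atTop 0] with n hn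
    have : NeZero n := ⟨hn⟩
    rw [List.map_cons, List.prod_cons, centredTrace_nil, zero_mul, map_zero]
  · simp only [List.map_cons, List.sum_cons, List.length_cons] at h
    have ih' (L' : List (List Bool))
        (hL' : (L'.map List.length).sum ≤ w.length + (L.map List.length).sum) :=
      ih _ (by omega) L' rfl
    refine HasDecay.congr (.add (.const_smul (.sum (hasDecay_loopTerm_mul b ih')) ν) (.const_smul
      (.sum fun i => .sum (hasDecay_wordTrace_mergeWords_mul b ih' i)) ν)) (.of_forall fun n => ?_)
    rw [List.map_cons, List.prod_cons, matrixMean_centredTrace_cons, sum_word_mul_letterDeriv_prod]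
    simp only [mul_smul, Finset.smul_sum]

theorem hasDecay_prod_centredTrace_mul_prod_wordTrace (ν : NNReal) (μ : K → NNReal)
    (L U : List (List Bool)) :
    HasDecay ν μ (fun n => (L.map (centredTrace ν (genericA n K))).prod *
      (U.map (wordTrace (genericA n K))).prod) L.length := by
  induction U generalizing L with
  | nil => simpa only [List.map_nil, List.prod_nil, mul_one] using hasDecay_prod_centredTrace ν μ L
  | cons u U ih =>
    simp only [List.map_cons, List.prod_cons, mul_left_comm _ (wordTrace _ u)]
    refine .wordTrace_mul ?_ (ih L)
    simpa only [List.map_cons, List.prod_cons, mul_assoc] using (ih (u :: L)).mono (Nat.le_succ _)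

end Traces

variable [DecidableEq K]

theorem hasDecay_centredGram_mul {ν : NNReal} {μ : K → NNReal} (c : K × List Bool × K)
    {L : List (K × List Bool × K)} (U : List (List Bool))
    (ih : ∀ (L' : List (K × List Bool × K)) (U' : List (List Bool)), L'.length ≤ L.length →
      HasDecay ν μ (fun n => (L'.map (centredGram μ (genericA n K) (genericY n K))).prod *
        (U'.map (wordTrace (genericA n K))).prod) ((L'.length + 1) / 2)) :
    HasDecay ν μ (fun n => centredGram μ (genericA n K) (genericY n K) c *
      ((L.map (centredGram μ (genericA n K) (genericY n K))).prod *
        (U.map (wordTrace (genericA n K))).prod)) (L.length / 2 + 1) := by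
  have gram (i : Fin L.length) (k l : K) (v : List Bool) : HasDecay ν μ (fun n =>
      wordGram (genericA n K) (genericY n K) v k l *
        (((L.eraseIdx i).map (centredGram μ (genericA n K) (genericY n K))).prod *
          (U.map (wordTrace (genericA n K))).prod)) (L.length / 2) := by
    have length_erase := List.length_eraseIdx_add_one i.isLt
    refine .wordGram_mul ?_ ?_
    · have := ih ((k, v, l) :: L.eraseIdx i) U (by rw [List.length_cons]; omega)
      rw [List.length_cons, length_erase] at this
      simpa only [List.map_cons, List.prod_cons, mul_assoc] using this.mono (by omega)
    · have := ih (L.eraseIdx i) (v :: U) (by omega)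
      simpa only [List.map_cons, List.prod_cons, mul_left_comm (wordTrace _ v), length_erase]
        using this
  obtain ⟨k, w, l⟩ := c
  have pairing (i : Fin L.length) := ((gram i l L[i].2.2 (wordStar w ++ L[i].2.1)).const_smul
    (if L[i].1 = k then 1 else 0)).add
      ((gram i L[i].1 l (L[i].2.1 ++ w)).const_smul (if L[i].2.2 = k then 1 else 0))
  refine (((HasDecay.sum pairing).inv_smul).const_smul (μ k)).congr (.of_forall fun n => ?_)
  rw [matrixMean_centredGram, sum_mul_columnDeriv_prod, mul_smul]
  simp only [ite_smul, one_smul, zero_smul, add_mul, ite_mul, zero_mul]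

theorem hasDecay_prod_centredGram_mul_prod_wordTrace (ν : NNReal) (μ : K → NNReal)
    (L : List (K × List Bool × K)) (U : List (List Bool)) :
    HasDecay ν μ (fun n => (L.map (centredGram μ (genericA n K) (genericY n K))).prod *
      (U.map (wordTrace (genericA n K))).prod) ((L.length + 1) / 2) := by
  induction h : L.length using Nat.strong_induction_on generalizing L U with
  | _ N ih =>
  rcases L with _ | ⟨c, L⟩
  · subst h
    simpa only [List.map_nil, List.prod_nil] using
      (hasDecay_prod_centredTrace_mul_prod_wordTrace ν μ [] U).mono (by simp)
  · rw [List.length_cons] at h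
    have := hasDecay_centredGram_mul (ν := ν) (μ := μ) c U
      fun L' U' (hL' : L'.length ≤ L.length) => ih _ (by omega) L' U' rfl
    rw [show (N + 1) / 2 = L.length / 2 + 1 by omega]
    simpa only [List.map_cons, List.prod_cons, mul_assoc] using this

end Decay

section AlmostSureLimits

open Asymptotics

variable {Ω : Type*} [MeasurableSpace Ω] {P : Measure Ω}

theorem ae_tendsto_zero_of_summable_integral {g : ℕ → Ω → ℝ} (nonneg : ∀ n ω, 0 ≤ g n ω)
    (integrable : ∀ n, Integrable (g n) P) (summable : Summable fun n => ∫ ω, g n ω ∂P) :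
    ∀ᵐ ω ∂P, Tendsto (fun n => g n ω) atTop (nhds 0) := by
  have aemeasurable (n : ℕ) := (integrable n).aemeasurable.ennreal_ofReal
  have lintegral_ne_top : ∫⁻ ω, ∑' n, ENNReal.ofReal (g n ω) ∂P ≠ ⊤ := by
    simp only [lintegral_tsum aemeasurable,
      ← ofReal_integral_eq_lintegral_ofReal (integrable _) (.of_forall (nonneg _))]
    exact summable.tsum_ofReal_ne_top
  filter_upwards [ae_lt_top' (.tsum aemeasurable) lintegral_ne_top] with ω hω
  have := (ENNReal.tendsto_toReal ENNReal.zero_ne_top).comp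
    (ENNReal.tendsto_atTop_zero_of_tsum_ne_top hω.ne)
  simpa only [Function.comp_def, ENNReal.toReal_ofReal (nonneg _ ω), ENNReal.toReal_zero] using this

theorem ae_tendsto_zero_of_fourth_moment {f : ℕ → Ω → ℝ}
    (integrable : ∀ n, Integrable (fun ω => f n ω ^ 4) P)
    (decay : (fun n => ∫ ω, f n ω ^ 4 ∂P) =O[atTop] fun n => (n : ℝ)⁻¹ ^ 2) :
    ∀ᵐ ω ∂P, Tendsto (fun n => f n ω) atTop (nhds 0) := by
  have summable : Summable fun n => ∫ ω, f n ω ^ 4 ∂P := by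
    refine summable_of_isBigO_nat (Real.summable_nat_pow_inv.2 one_lt_two) ?_
    simpa only [inv_pow] using decay
  filter_upwards [ae_tendsto_zero_of_summable_integral (fun n ω => by positivity) integrable
    summable] with ω hω
  rw [← isLittleO_one_iff ℝ] at hω ⊢
  exact .of_pow (n := 4) (by simpa only [Pi.pow_def, one_pow] using hω) four_ne_zero

variable {K : Type*}

/-- The entries of a pair of matrices, as a family indexed by `EntryIndex`. -/
def matrixEntries {n : ℕ} (A : Matrix (Fin n) (Fin n) ℝ) (Y : Matrix (Fin n) K ℝ) :
    EntryIndex n K → ℝ :=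
  Sum.elim (fun p => A p.1 p.2) fun p => Y p.1 p.2

theorem genericA_map_aeval {n : ℕ} (A : Matrix (Fin n) (Fin n) ℝ) (Y : Matrix (Fin n) K ℝ) :
    (genericA n K).map (MvPolynomial.aeval (matrixEntries A Y)) = A := by
  ext i j
  exact MvPolynomial.aeval_X _ _

theorem genericY_map_aeval {n : ℕ} (A : Matrix (Fin n) (Fin n) ℝ) (Y : Matrix (Fin n) K ℝ) :
    (genericY n K).map (MvPolynomial.aeval (matrixEntries A Y)) = Y := by
  ext i j
  exact MvPolynomial.aeval_X _ _

variable [Fintype K] {ν : NNReal} {μ : K → NNReal}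
  {A : (n : ℕ) → Ω → Matrix (Fin n) (Fin n) ℝ} {Y : (n : ℕ) → Ω → Matrix (Fin n) K ℝ}

theorem ae_tendsto_aeval_of_hasDecay
    (law : ∀ n, HasLaw (fun ω => matrixEntries (A n ω) (Y n ω))
      (gaussianFamily (entryVariance n ν μ)) P)
    {p : (n : ℕ) → EntryPoly n K} (decay : HasDecay ν μ (fun n => p n ^ 4) 2) :
    ∀ᵐ ω ∂P, Tendsto (fun n => MvPolynomial.aeval (matrixEntries (A n ω) (Y n ω)) (p n))
      atTop (nhds 0) := by
  have integrable (n : ℕ) :=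
    integrable_eval_gaussianFamily (entryVariance n ν μ) (p n ^ 4)
  refine ae_tendsto_zero_of_fourth_moment (fun n => ?_) ?_
  · have := integrable n
    rw [← (law n).map_eq] at this
    simpa only [MvPolynomial.aeval_eq_eval, RingHom.coe_coe, map_pow, Function.comp_def] using
      this.comp_aemeasurable (law n).aemeasurable
  · refine decay.congr_left fun n => ?_
    rw [gaussianMean_apply, ← (law n).integral_comp (integrable n).aestronglyMeasurable]
    simp only [MvPolynomial.aeval_eq_eval, map_pow, Function.comp_def]

theorem ae_tendsto_centredTrace
    (law : ∀ n, HasLaw (fun ω => matrixEntries (A n ω) (Y n ω))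
      (gaussianFamily (entryVariance n ν μ)) P) (w : List Bool) :
    ∀ᵐ ω ∂P, Tendsto (fun n => centredTrace ν (A n ω) w) atTop (nhds 0) := by
  have decay : HasDecay ν μ (fun n => centredTrace ν (genericA n K) w ^ 4) 2 := by
    simpa only [List.map_replicate, List.prod_replicate] using
      (hasDecay_prod_centredTrace ν μ (.replicate 4 w)).mono (by simp)
  simpa only [map_centredTrace, genericA_map_aeval] using ae_tendsto_aeval_of_hasDecay law decay

variable [DecidableEq K]

theorem ae_tendsto_centredGram
    (law : ∀ n, HasLaw (fun ω => matrixEntries (A n ω) (Y n ω))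
      (gaussianFamily (entryVariance n ν μ)) P) (c : K × List Bool × K) :
    ∀ᵐ ω ∂P, Tendsto (fun n => centredGram μ (A n ω) (Y n ω) c) atTop (nhds 0) := by
  have decay : HasDecay ν μ
      (fun n => centredGram μ (genericA n K) (genericY n K) c ^ 4) 2 := by
    simpa only [List.map_replicate, List.prod_replicate, List.map_nil, List.prod_nil, mul_one] using
      (hasDecay_prod_centredGram_mul_prod_wordTrace ν μ (.replicate 4 c) []).mono (by simp)
  simpa only [map_centredGram, genericA_map_aeval, genericY_map_aeval] using
    ae_tendsto_aeval_of_hasDecay law decay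

theorem ae_tendsto_wordGram
    (law : ∀ n, HasLaw (fun ω => matrixEntries (A n ω) (Y n ω))
      (gaussianFamily (entryVariance n ν μ)) P) (w : List Bool) (k l : K) :
    ∀ᵐ ω ∂P, Tendsto (fun n => wordGram (A n ω) (Y n ω) w k l) atTop
      (nhds (if k = l then μ k * circularMoment ν w else 0)) := by
  filter_upwards [ae_tendsto_centredGram law (k, w, l), ae_tendsto_centredTrace law w]
    with ω gram_limit trace_limit
  have := gram_limit.add ((trace_limit.add_const (circularMoment (ν : ℝ) w)).const_mul
    (if k = l then (μ k : ℝ) else 0))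
  simpa only [centredGram, centredTrace, Algebra.algebraMap_self, RingHom.id_apply,
    sub_add_cancel, smul_eq_mul, zero_add, ite_mul, zero_mul] using this

end AlmostSureLimits

section WeightLaws

/-- The matrix `n^(-1/2) W` that multiplies the hidden state at each step. -/
noncomputable def transitionMatrix {n : ℕ} (W : Fin n → Fin n → ℝ) : Matrix (Fin n) (Fin n) ℝ :=
  (Real.sqrt n)⁻¹ • Matrix.of W

/-- The matrix `[F | Cᵀ]`, whose Gram matrices contain those of the input and output weights. -/
def weightColumns {n nx ny : ℕ} (F : Fin n → Fin nx → ℝ) (C : Fin ny → Fin n → ℝ) :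
    Matrix (Fin n) (Fin nx ⊕ Fin ny) ℝ :=
  fromCols (Matrix.of F) (Matrix.of C)ᵀ

/-- The initialization law of independent centred Gaussian weights `(W, F, C)`. -/
noncomputable abbrev weightLaw (n nx ny : ℕ) (νW νF νC : NNReal) :
    Measure ((Fin n → Fin n → ℝ) × (Fin n → Fin nx → ℝ) × (Fin ny → Fin n → ℝ)) :=
  (Measure.pi fun _ => Measure.pi fun _ => gaussianReal 0 νW).prod
    ((Measure.pi fun _ => Measure.pi fun _ => gaussianReal 0 νF).prod
      (Measure.pi fun _ => Measure.pi fun _ => gaussianReal 0 νC))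

theorem gaussianReal_preimage_inv_sqrt_mul (ν : NNReal) (n : ℕ) {s : Set ℝ}
    (hs : MeasurableSet s) :
    gaussianReal 0 ν ((fun x => (Real.sqrt n)⁻¹ * x) ⁻¹' s) = gaussianReal 0 (ν / n) s := by
  rw [← Measure.map_apply (measurable_const_mul _) hs, gaussianReal_map_const_mul, mul_zero]
  congr 2
  ext
  simp [div_eq_inv_mul]

theorem measurePreserving_matrixEntries (n nx ny : ℕ) (νW νF νC : NNReal) :
    MeasurePreserving (fun θ => matrixEntries (transitionMatrix θ.1) (weightColumns θ.2.1 θ.2.2))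
      (weightLaw n nx ny νW νF νC)
      (gaussianFamily (entryVariance n νW (Sum.elim (fun _ => νF) fun _ => νC))) := by
  have measurable : Measurable fun θ : (Fin n → Fin n → ℝ) × (Fin n → Fin nx → ℝ) ×
      (Fin ny → Fin n → ℝ) =>
      matrixEntries (transitionMatrix θ.1) (weightColumns θ.2.1 θ.2.2) := by
    refine measurable_pi_lambda _ ?_
    rintro (⟨a, b⟩ | ⟨a, k | m⟩) <;>
      simp only [matrixEntries, transitionMatrix, weightColumns, Sum.elim_inl, Sum.elim_inr,
        Matrix.smul_apply, Matrix.of_apply, fromCols_apply_inl, fromCols_apply_inr,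
        Matrix.transpose_apply, smul_eq_mul] <;>
      fun_prop
  refine ⟨measurable, (Measure.pi_eq fun s hs => ?_).symm⟩
  have preimage_box : (fun θ => matrixEntries (transitionMatrix θ.1)
      (weightColumns θ.2.1 θ.2.2)) ⁻¹' Set.univ.pi s =
      (Set.univ.pi fun a => Set.univ.pi fun b =>
        (fun y => (Real.sqrt n)⁻¹ * y) ⁻¹' s (.inl (a, b))) ×ˢ
      (Set.univ.pi fun a => Set.univ.pi fun k => s (.inr (a, .inl k))) ×ˢ
      (Set.univ.pi fun m => Set.univ.pi fun a => s (.inr (a, .inr m))) := by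
    ext θ
    simp [matrixEntries, transitionMatrix, weightColumns, Set.mem_pi, forall_and,
      forall_comm (α := Fin n) (β := Fin ny)]
  rw [Measure.map_apply measurable (.univ_pi hs), preimage_box]
  simp only [Measure.prod_prod, Measure.pi_pi, Fintype.prod_sum_type, Fintype.prod_prod_type,
    gaussianReal_preimage_inv_sqrt_mul _ _ (hs _), entryVariance, Sum.elim_inl, Sum.elim_inr,
    Finset.prod_mul_distrib]
  rw [Finset.prod_comm (s := (Finset.univ : Finset (Fin ny)))]

variable {Ω : Type*} [MeasurableSpace Ω] {P : Measure Ω} {nx ny : ℕ} {νW νF νC : NNReal}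
  {W : (n : ℕ) → Ω → Fin n → Fin n → ℝ} {F : (n : ℕ) → Ω → Fin n → Fin nx → ℝ}
  {C : (n : ℕ) → Ω → Fin ny → Fin n → ℝ}

theorem ae_tendsto_wordGram_weightColumns
    (law : ∀ n, HasLaw (fun ω => (W n ω, F n ω, C n ω)) (weightLaw n nx ny νW νF νC) P)
    (w : List Bool) (k l : Fin nx ⊕ Fin ny) :
    ∀ᵐ ω ∂P, Tendsto
      (fun n => wordGram (transitionMatrix (W n ω)) (weightColumns (F n ω) (C n ω)) w k l) atTop
      (nhds (if k = l then (Sum.elim (fun _ => νF) (fun _ => νC) k : NNReal) * circularMoment νW w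
        else 0)) :=
  ae_tendsto_wordGram (fun n =>
    (measurePreserving_matrixEntries n nx ny νW νF νC).comp_hasLaw (law n)) w k l

theorem wordGram_weightColumns_inl {n : ℕ} (A : Matrix (Fin n) (Fin n) ℝ)
    (F : Fin n → Fin nx → ℝ) (C : Fin ny → Fin n → ℝ) (w : List Bool) (k l : Fin nx) :
    wordGram A (weightColumns F C) w (.inl k) (.inl l) = wordGram A (Matrix.of F) w k l := rfl

theorem wordGram_weightColumns_inr {n : ℕ} (A : Matrix (Fin n) (Fin n) ℝ)
    (F : Fin n → Fin nx → ℝ) (C : Fin ny → Fin n → ℝ) (w : List Bool) (k l : Fin ny) :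
    wordGram A (weightColumns F C) w (.inr k) (.inr l) = wordGram A (Matrix.of C)ᵀ w k l := rfl

theorem ae_tendsto_wordGram_weights
    (law : ∀ n, HasLaw (fun ω => (W n ω, F n ω, C n ω)) (weightLaw n nx ny νW νF νC) P) :
    ∀ᵐ ω ∂P, ∀ w : List Bool,
      Tendsto (fun n => wordGram (transitionMatrix (W n ω)) (Matrix.of (F n ω)) w) atTop
        (nhds ((νF * circularMoment νW w) • 1)) ∧
      Tendsto (fun n => wordGram (transitionMatrix (W n ω)) (Matrix.of (C n ω))ᵀ w) atTop
        (nhds ((νC * circularMoment νW w) • 1)) := by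
  have entry_limits := ae_all_iff.2 fun w => ae_all_iff.2 fun k => ae_all_iff.2 fun l =>
    ae_tendsto_wordGram_weightColumns law w k l
  filter_upwards [entry_limits] with ω hω w
  constructor <;> refine tendsto_pi_nhds.2 fun k => tendsto_pi_nhds.2 fun l => ?_
  · simpa [Matrix.one_apply, wordGram_weightColumns_inl] using hω w (.inl k) (.inl l)
  · simpa [Matrix.one_apply, wordGram_weightColumns_inr] using hω w (.inr k) (.inr l)

end WeightLaws

section Gradient

theorem sum_pow_mulVec_succ {m R : Type*} [Fintype m] [DecidableEq m] [Semiring R]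
    (A : Matrix m m R) (g : ℕ → m → R) (t : ℕ) :
    ∑ j ∈ Finset.range (t + 1), A ^ j *ᵥ g (t - j) =
      A *ᵥ ∑ j ∈ Finset.range t, A ^ j *ᵥ g (t - 1 - j) + g t := by
  have shift (j : ℕ) : t - 1 - j = t - (j + 1) := by omega
  simp only [Finset.sum_range_succ', mulVec_sum, mulVec_mulVec, ← pow_succ', shift, pow_zero,
    one_mulVec, Nat.sub_zero]

theorem hasDerivAt_mulVec {k l : Type*} [Finite k] [Fintype l] {M : ℝ → Matrix k l ℝ}
    {M' : Matrix k l ℝ} {v : ℝ → l → ℝ} {v' : l → ℝ} {ε : ℝ}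
    (hM : ∀ i j, HasDerivAt (fun ε => M ε i j) (M' i j) ε) (hv : HasDerivAt v v' ε) :
    HasDerivAt (fun ε => M ε *ᵥ v ε) (M' *ᵥ v ε + M ε *ᵥ v') ε := by
  have := Fintype.ofFinite k
  refine hasDerivAt_pi.2 fun i => ?_
  have := HasDerivAt.fun_sum (u := Finset.univ)
    fun j _ => (hM i j).fun_mul (hasDerivAt_pi.1 hv j)
  simpa only [Finset.sum_add_distrib] using! this

theorem hasDerivAt_affine (a b : ℝ) : HasDerivAt (fun ε => a + ε * b) b 0 :=
  ((hasDerivAt_id _).mul_const b).const_add a |>.congr_deriv (one_mul b)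

variable {n nx ny : ℕ}

/-- The hidden state before time `t`: it vanishes at `t = 0`, and is `rnnH` at `t - 1` otherwise. -/
noncomputable def rnnState (W : Fin n → Fin n → ℝ) (F : Fin n → Fin nx → ℝ)
    (x : ℕ → Fin nx → ℝ) : ℕ → Fin n → ℝ
  | 0 => 0
  | t + 1 => rnnH n nx W F x t

theorem rnnState_succ (W : Fin n → Fin n → ℝ) (F : Fin n → Fin nx → ℝ) (x : ℕ → Fin nx → ℝ)
    (t : ℕ) :
    rnnState W F x (t + 1) = transitionMatrix W *ᵥ rnnState W F x t + Matrix.of F *ᵥ x t := by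
  cases t with
  | zero => simp only [rnnState, rnnH, mulVec_zero, zero_add]; rfl
  | succ t =>
    ext i
    simp [rnnState, rnnH, transitionMatrix, Matrix.mulVec, dotProduct, Finset.mul_sum, mul_assoc]

theorem rnnState_eq_sum (W : Fin n → Fin n → ℝ) (F : Fin n → Fin nx → ℝ) (x : ℕ → Fin nx → ℝ)
    (t : ℕ) :
    rnnState W F x t =
      ∑ j ∈ Finset.range t, transitionMatrix W ^ j *ᵥ (Matrix.of F *ᵥ x (t - 1 - j)) := by
  induction t with
  | zero => rfl
  | succ t ih =>
    rw [rnnState_succ, ih]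
    exact (sum_pow_mulVec_succ _ (fun j => Matrix.of F *ᵥ x j) t).symm

theorem hasDerivAt_rnnState_line (W dW : Fin n → Fin n → ℝ) (F dF : Fin n → Fin nx → ℝ)
    (x : ℕ → Fin nx → ℝ) (t : ℕ) :
    HasDerivAt (fun ε : ℝ => rnnState (W + ε • dW) (F + ε • dF) x t)
      (∑ j ∈ Finset.range t, transitionMatrix W ^ j *ᵥ
        (transitionMatrix dW *ᵥ rnnState W F x (t - 1 - j) + Matrix.of dF *ᵥ x (t - 1 - j))) 0 := by
  induction t with
  | zero => exact hasDerivAt_const _ _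
  | succ t ih =>
    have transition : ∀ i j, HasDerivAt (fun ε : ℝ => transitionMatrix (W + ε • dW) i j)
        (transitionMatrix dW i j) 0 := fun i j => (hasDerivAt_affine (W i j) (dW i j)).const_mul _
    have input : ∀ i k, HasDerivAt (fun ε : ℝ => Matrix.of (F + ε • dF) i k)
        (Matrix.of dF i k) 0 := fun i k => hasDerivAt_affine (F i k) (dF i k)
    simp only [rnnState_succ]
    refine ((hasDerivAt_mulVec transition ih).add
      (hasDerivAt_mulVec input (hasDerivAt_const _ (x t)))).congr_deriv ?_
    rw [Nat.add_sub_cancel, sum_pow_mulVec_succ _ (fun j =>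
      transitionMatrix dW *ᵥ rnnState W F x j + Matrix.of dF *ᵥ x j)]
    simp only [zero_smul, add_zero, mulVec_zero]
    abel

theorem differentiable_rnnState (x : ℕ → Fin nx → ℝ) (t : ℕ) :
    Differentiable ℝ fun θ : (Fin n → Fin n → ℝ) × (Fin n → Fin nx → ℝ) × (Fin ny → Fin n → ℝ) =>
      rnnState θ.1 θ.2.1 x t := by
  induction t with
  | zero => exact differentiable_const _
  | succ t ih =>
    refine differentiable_pi.2 fun i => ?_
    have (j : Fin n) := differentiable_pi.1 ih j
    simp only [rnnState_succ, transitionMatrix, Matrix.mulVec, dotProduct, Pi.add_apply,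
      Matrix.smul_apply, Matrix.of_apply]
    fun_prop

theorem fderiv_rnnY
    (θ d : (Fin n → Fin n → ℝ) × (Fin n → Fin nx → ℝ) × (Fin ny → Fin n → ℝ))
    (x : ℕ → Fin nx → ℝ) (t : ℕ) (m : Fin ny) :
    fderiv ℝ (fun θ' => rnnY n nx ny θ' x t m) θ d =
      (Real.sqrt n)⁻¹ * (d.2.2 m ⬝ᵥ rnnState θ.1 θ.2.1 x (t + 1) +
        θ.2.2 m ⬝ᵥ ∑ j ∈ Finset.range (t + 1), transitionMatrix θ.1 ^ j *ᵥ
          (transitionMatrix d.1 *ᵥ rnnState θ.1 θ.2.1 x (t - j) +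
            Matrix.of d.2.1 *ᵥ x (t - j))) := by
  have differentiable : Differentiable ℝ fun θ' => rnnY n nx ny θ' x t m := by
    have (i : Fin n) := differentiable_pi.1 (differentiable_rnnState (ny := ny) x (t + 1)) i
    simp only [rnnState] at this
    unfold rnnY
    fun_prop
  have line := (differentiable θ).hasFDerivAt.hasLineDerivAt d
  refine line.unique ?_
  have readout (i : Fin n) := hasDerivAt_affine (θ.2.2 m i) (d.2.2 m i)
  have state := hasDerivAt_pi.1
    (hasDerivAt_rnnState_line θ.1 d.1 θ.2.1 d.2.1 x (t + 1))
  refine ((HasDerivAt.fun_sum (u := Finset.univ) fun i _ =>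
    (readout i).fun_mul (state i)).const_mul (Real.sqrt n)⁻¹).congr_deriv ?_
  simp [Finset.sum_add_distrib, dotProduct]

end Gradient

section Kernel

theorem dotProduct_pow_mulVec_single_mulVec {k l R : Type*} [Fintype k] [DecidableEq k]
    [Fintype l] [DecidableEq l] [CommSemiring R] (c : k → R) (A : Matrix k k R) (j : ℕ) (a : k)
    (b : l) (v : l → R) :
    c ⬝ᵥ A ^ j *ᵥ (Matrix.of (fun i i' => if i = a ∧ i' = b then 1 else 0) *ᵥ v) =
      (c ᵥ* A ^ j) a * v b := by
  have rank_one : Matrix.of (fun i i' => if i = a ∧ i' = b then 1 else 0) *ᵥ v =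
      v b • Pi.single a (1 : R) := by
    ext i
    by_cases h : i = a <;> simp [Matrix.mulVec, dotProduct, h]
  rw [rank_one, dotProduct_mulVec, dotProduct_smul, dotProduct_single_one, smul_eq_mul, mul_comm]

theorem sum_sum_mul_sum_mul_eq_sum_dotProduct {ι ι' α β R : Type*} [Fintype α] [Fintype β]
    [CommSemiring R] (s : Finset ι) (s' : Finset ι') (p : ι → α → R) (q : ι → β → R)
    (p' : ι' → α → R) (q' : ι' → β → R) :
    ∑ a, ∑ b, (∑ j ∈ s, p j a * q j b) * (∑ j' ∈ s', p' j' a * q' j' b) =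
      ∑ j ∈ s, ∑ j' ∈ s', (p j ⬝ᵥ p' j') * (q j ⬝ᵥ q' j') := by
  simp only [dotProduct, Finset.sum_mul_sum]
  simp_rw [Finset.sum_comm (s := Finset.univ) (t := s),
    Finset.sum_comm (s := Finset.univ) (t := s')]
  refine Finset.sum_congr rfl fun j _ => Finset.sum_congr rfl fun j' _ =>
    Finset.sum_congr rfl fun a _ => Finset.sum_congr rfl fun b _ => mul_mul_mul_comm ..

theorem inv_sqrt_mul_inv_sqrt (n : ℕ) : (Real.sqrt n)⁻¹ * (Real.sqrt n)⁻¹ = (n : ℝ)⁻¹ := by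
  rw [← mul_inv, Real.mul_self_sqrt n.cast_nonneg]

variable {n nx ny : ℕ}
  (θ : (Fin n → Fin n → ℝ) × (Fin n → Fin nx → ℝ) × (Fin ny → Fin n → ℝ))
  (x x' : ℕ → Fin nx → ℝ) (t s : ℕ) (m m' : Fin ny)

theorem transitionMatrix_zero : transitionMatrix (0 : Fin n → Fin n → ℝ) = 0 :=
  smul_zero _

theorem fderiv_rnnY_recurrent (a b : Fin n) :
    fderiv ℝ (fun θ' => rnnY n nx ny θ' x t m) θ
        ((fun i j => if i = a ∧ j = b then (1 : ℝ) else 0), 0, 0) =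
      (n : ℝ)⁻¹ * ∑ j ∈ Finset.range (t + 1),
        (θ.2.2 m ᵥ* transitionMatrix θ.1 ^ j) a * rnnState θ.1 θ.2.1 x (t - j) b := by
  have direction : transitionMatrix (fun i j : Fin n => if i = a ∧ j = b then (1 : ℝ) else 0) =
      (Real.sqrt n)⁻¹ • Matrix.of fun i j => if i = a ∧ j = b then (1 : ℝ) else 0 := rfl
  simp only [fderiv_rnnY, direction, Pi.zero_apply, zero_dotProduct, zero_add, of_zero,
    zero_mulVec, add_zero, smul_mulVec, mulVec_smul, dotProduct_sum, dotProduct_smul,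
    dotProduct_pow_mulVec_single_mulVec, ← Finset.smul_sum, smul_eq_mul]
  rw [← mul_assoc, inv_sqrt_mul_inv_sqrt]

theorem fderiv_rnnY_input (a : Fin n) (k : Fin nx) :
    fderiv ℝ (fun θ' => rnnY n nx ny θ' x t m) θ
        (0, (fun i j => if i = a ∧ j = k then (1 : ℝ) else 0), 0) =
      (Real.sqrt n)⁻¹ * ∑ j ∈ Finset.range (t + 1),
        (θ.2.2 m ᵥ* transitionMatrix θ.1 ^ j) a * x (t - j) k := by
  simp only [fderiv_rnnY, transitionMatrix_zero, Pi.zero_apply, zero_dotProduct, zero_add,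
    zero_mulVec, dotProduct_sum, dotProduct_pow_mulVec_single_mulVec]

theorem fderiv_rnnY_output (c : Fin ny) (a : Fin n) :
    fderiv ℝ (fun θ' => rnnY n nx ny θ' x t m) θ
        (0, 0, (fun i j => if i = c ∧ j = a then (1 : ℝ) else 0)) =
      if m = c then (Real.sqrt n)⁻¹ * rnnState θ.1 θ.2.1 x (t + 1) a else 0 := by
  by_cases h : m = c <;> simp [fderiv_rnnY, transitionMatrix_zero, dotProduct, h]

theorem rnnNTK_eq_sum :
    rnnNTK n nx ny θ x x' t s m m' =
      ∑ j ∈ Finset.range (t + 1), ∑ j' ∈ Finset.range (s + 1),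
        (n : ℝ)⁻¹ * ((θ.2.2 m ᵥ* transitionMatrix θ.1 ^ j) ⬝ᵥ
          (θ.2.2 m' ᵥ* transitionMatrix θ.1 ^ j')) *
        ((n : ℝ)⁻¹ * (rnnState θ.1 θ.2.1 x (t - j) ⬝ᵥ rnnState θ.1 θ.2.1 x' (s - j')) +
          x (t - j) ⬝ᵥ x' (s - j')) +
      if m = m' then
        (n : ℝ)⁻¹ * (rnnState θ.1 θ.2.1 x (t + 1) ⬝ᵥ rnnState θ.1 θ.2.1 x' (s + 1)) else 0 := by
  have output : ∑ c, ∑ a : Fin n,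
      (if m = c then (Real.sqrt n)⁻¹ * rnnState θ.1 θ.2.1 x (t + 1) a else 0) *
        (if m' = c then (Real.sqrt n)⁻¹ * rnnState θ.1 θ.2.1 x' (s + 1) a else 0) =
      if m = m' then
        (n : ℝ)⁻¹ * (rnnState θ.1 θ.2.1 x (t + 1) ⬝ᵥ rnnState θ.1 θ.2.1 x' (s + 1)) else 0 := by
    rw [Finset.sum_eq_single m (fun c _ h => by simp [h.symm]) (by simp)]
    by_cases h : m = m'
    · simp only [h, if_true, dotProduct, Finset.mul_sum, mul_mul_mul_comm _ _ (Real.sqrt n)⁻¹,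
        inv_sqrt_mul_inv_sqrt]
    · simp [h, eq_comm (a := m')]
  simp only [rnnNTK, fderiv_rnnY_recurrent, fderiv_rnnY_input, fderiv_rnnY_output, output,
    mul_mul_mul_comm _ _ (n : ℝ)⁻¹, mul_mul_mul_comm _ _ (Real.sqrt n)⁻¹, inv_sqrt_mul_inv_sqrt,
    ← Finset.mul_sum]
  rw [sum_sum_mul_sum_mul_eq_sum_dotProduct,
    sum_sum_mul_sum_mul_eq_sum_dotProduct _ _ _ (fun j => x (t - j)) _ (fun j => x' (s - j))]
  simp only [Finset.mul_sum, ← Finset.sum_add_distrib]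
  congr! 3
  ring

theorem wordGram_transpose_apply {l : Type*} (A : Matrix (Fin n) (Fin n) ℝ)
    (C : Matrix l (Fin n) ℝ) (j j' : ℕ) (k k' : l) :
    wordGram A Cᵀ (List.replicate j true ++ List.replicate j' false) k k' =
      (n : ℝ)⁻¹ * ((C k ᵥ* A ^ j) ⬝ᵥ (C k' ᵥ* A ^ j')) := by
  rw [wordGram, word_append, word_replicate_true, word_replicate_false, transpose_transpose,
    ← Matrix.mul_assoc, Matrix.mul_assoc, ← transpose_mul, Matrix.smul_apply, Matrix.mul_apply']
  rfl

theorem dotProduct_wordGram_mulVec {l : Type*} [Fintype l] (A : Matrix (Fin n) (Fin n) ℝ)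
    (F : Matrix (Fin n) l ℝ) (u v : l → ℝ) (i i' : ℕ) :
    u ⬝ᵥ wordGram A F (List.replicate i false ++ List.replicate i' true) *ᵥ v =
      (n : ℝ)⁻¹ * (A ^ i *ᵥ (F *ᵥ u) ⬝ᵥ A ^ i' *ᵥ (F *ᵥ v)) := by
  rw [wordGram, word_append, word_replicate_true, word_replicate_false, smul_mulVec,
    dotProduct_smul, smul_eq_mul, ← mulVec_mulVec, ← mulVec_mulVec, ← mulVec_mulVec,
    dotProduct_mulVec, vecMul_transpose, dotProduct_mulVec, vecMul_transpose]

theorem inv_mul_rnnState_dotProduct_rnnState (W : Fin n → Fin n → ℝ) (F : Fin n → Fin nx → ℝ) :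
    (n : ℝ)⁻¹ * (rnnState W F x t ⬝ᵥ rnnState W F x' s) =
      ∑ i ∈ Finset.range t, ∑ i' ∈ Finset.range s, x (t - 1 - i) ⬝ᵥ
        wordGram (transitionMatrix W) (Matrix.of F)
          (List.replicate i false ++ List.replicate i' true) *ᵥ x' (s - 1 - i') := by
  simp only [rnnState_eq_sum, sum_dotProduct, dotProduct_sum, Finset.mul_sum,
    dotProduct_wordGram_mulVec]
  exact Finset.sum_comm

end Kernel

section KernelLimit

theorem sum_range_sum_range_ite_eq {R : Type*} [AddCommMonoid R] (t s : ℕ) (f : ℕ → ℕ → R) :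
    ∑ j ∈ Finset.range t, ∑ j' ∈ Finset.range s, (if j = j' then f j j' else 0) =
      ∑ j ∈ Finset.range (min t s), f j j := by
  simp only [Finset.sum_ite_eq, Finset.mem_range]
  rw [← Finset.sum_filter]
  refine Finset.sum_congr ?_ fun _ _ => rfl
  ext j
  simp

theorem sum_range_sum_range_sub {R : Type*} [Semiring R] (M : ℕ) (f : ℕ → R) :
    ∑ j ∈ Finset.range (M + 1), ∑ i ∈ Finset.range (M - j), f (i + j + 1) =
      ∑ k ∈ Finset.range (M + 1), (k : R) * f k := by
  induction M with
  | zero => simp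
  | succ M ih =>
    have last_term : ∀ j ∈ Finset.range (M + 1), ∑ i ∈ Finset.range (M + 1 - j), f (i + j + 1) =
        ∑ i ∈ Finset.range (M - j), f (i + j + 1) + f (M + 1) := by
      intro j hj
      have hj : j ≤ M := Nat.lt_succ_iff.1 (Finset.mem_range.1 hj)
      rw [Nat.succ_sub hj, Finset.sum_range_succ, Nat.sub_add_cancel hj]
    rw [Finset.sum_range_succ, Finset.sum_range_succ _ (M + 1), Finset.sum_congr rfl last_term,
      Finset.sum_add_distrib, ih]
    simp

variable {nx ny : ℕ} (x x' : ℕ → Fin nx → ℝ)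

/-- The limit of `n⁻¹ ⟪rnnState x t, rnnState x' s⟫` for weights of variances `νW` and `νF`. -/
def limitStateKernel (νW νF : ℝ) (t s : ℕ) : ℝ :=
  ∑ i ∈ Finset.range (min t s), νF * νW ^ i * (x (t - 1 - i) ⬝ᵥ x' (s - 1 - i))

theorem sum_mul_limitStateKernel (νW νF νC : ℝ) (t s : ℕ) :
    ∑ j ∈ Finset.range (min t s + 1), νC * νW ^ j * limitStateKernel x x' νW νF (t - j) (s - j) =
      ∑ j ∈ Finset.range (min t s + 1),
        j * (νC * νF * νW ^ (j - 1) * (x (t - j) ⬝ᵥ x' (s - j))) := by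
  rw [← sum_range_sum_range_sub _ fun j => νC * νF * νW ^ (j - 1) * (x (t - j) ⬝ᵥ x' (s - j))]
  refine Finset.sum_congr rfl fun j _ => ?_
  rw [limitStateKernel, Finset.mul_sum, show min (t - j) (s - j) = min t s - j by omega]
  refine Finset.sum_congr rfl fun i _ => ?_
  rw [show t - j - 1 - i = t - (i + j + 1) by omega,
    show s - j - 1 - i = s - (i + j + 1) by omega, Nat.add_sub_cancel, pow_add]
  ring

theorem sum_mul_add_limitStateKernel (νW νF νC : ℝ) (t s : ℕ) :
    ∑ j ∈ Finset.range (min t s + 1), νC * νW ^ j *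
        (limitStateKernel x x' νW νF (t - j) (s - j) + x (t - j) ⬝ᵥ x' (s - j)) +
      limitStateKernel x x' νW νF (t + 1) (s + 1) =
    ∑ j ∈ Finset.range (min t s + 1),
      (νC * (j * νF * νW ^ (j - 1) + νW ^ j) + νF * νW ^ j) * (x (t - j) ⬝ᵥ x' (s - j)) := by
  simp only [mul_add, Finset.sum_add_distrib, sum_mul_limitStateKernel]
  rw [limitStateKernel, Nat.add_min_add_right]
  simp only [← Finset.sum_add_distrib, Nat.add_sub_cancel]
  refine Finset.sum_congr rfl fun j _ => ?_
  ring

theorem kronecker_toepMat_apply (T : ℕ) (ρ : ℕ → ℝ) (t s : Fin T) (m m' : Fin ny) :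
    Matrix.kroneckerMap (· * ·) ((toepMat T nx x)ᵀ * scaleMat T nx ρ * toepMat T nx x')
      (1 : Matrix (Fin ny) (Fin ny) ℝ) (t, m) (s, m') =
      if m = m' then ∑ j ∈ Finset.range (min (t : ℕ) s + 1), ρ j * (x (t - j) ⬝ᵥ x' (s - j))
      else 0 := by
  have block (j : Fin T) : ∑ k : Fin nx, (if (j : ℕ) ≤ t then x (t - j) k else 0) * ρ j *
      (if (j : ℕ) ≤ s then x' (s - j) k else 0) =
      if (j : ℕ) ≤ min (t : ℕ) s then ρ j * (x (t - j) ⬝ᵥ x' (s - j)) else 0 := by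
    by_cases h : (j : ℕ) ≤ t <;> by_cases h' : (j : ℕ) ≤ s <;>
      simp [h, h', dotProduct, Finset.mul_sum, mul_left_comm, mul_assoc, -Fin.val_fin_le]
  have range_min : (Finset.range T).filter (· ≤ min (t : ℕ) s) =
      Finset.range (min (t : ℕ) s + 1) := by
    ext j
    simp only [Finset.mem_filter, Finset.mem_range]
    omega
  rw [Matrix.kroneckerMap_apply, Matrix.one_apply, mul_ite, mul_one, mul_zero, scaleMat,
    Matrix.mul_apply, Fintype.sum_prod_type]
  simp only [Matrix.mul_diagonal, Matrix.transpose_apply, toepMat, Matrix.of_apply, block]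
  rw [Fin.sum_univ_eq_sum_range fun j =>
    if j ≤ min (t : ℕ) s then ρ j * (x (t - j) ⬝ᵥ x' (s - j)) else 0, ← Finset.sum_filter,
    range_min]

variable {x x'} {νW νF νC : ℝ} {W : (n : ℕ) → Fin n → Fin n → ℝ}
  {F : (n : ℕ) → Fin n → Fin nx → ℝ} {C : (n : ℕ) → Fin ny → Fin n → ℝ}

theorem tendsto_rnnState_dotProduct_rnnState
    (input : ∀ w, Tendsto (fun n => wordGram (transitionMatrix (W n)) (Matrix.of (F n)) w) atTop
      (nhds ((νF * circularMoment νW w) • 1))) (t s : ℕ) :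
    Tendsto (fun n : ℕ =>
        (n : ℝ)⁻¹ * (rnnState (W n) (F n) x t ⬝ᵥ rnnState (W n) (F n) x' s))
      atTop (nhds (limitStateKernel x x' νW νF t s)) := by
  have diagonal : limitStateKernel x x' νW νF t s = ∑ i ∈ Finset.range t, ∑ i' ∈ Finset.range s,
      x (t - 1 - i) ⬝ᵥ ((νF * circularMoment νW
        (List.replicate i false ++ List.replicate i' true)) • (1 : Matrix (Fin nx) (Fin nx) ℝ)) *ᵥ
          x' (s - 1 - i') := by
    rw [limitStateKernel, ← sum_range_sum_range_ite_eq t s fun i i' =>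
      νF * νW ^ i * (x (t - 1 - i) ⬝ᵥ x' (s - 1 - i'))]
    refine Finset.sum_congr rfl fun i _ => Finset.sum_congr rfl fun i' _ => ?_
    have moment := circularMoment_replicate_append_replicate νW false i i'
    rw [Bool.not_false] at moment
    simp only [moment, smul_mulVec, one_mulVec, dotProduct_smul, smul_eq_mul, mul_ite, ite_mul,
      mul_zero, zero_mul]
  simp only [inv_mul_rnnState_dotProduct_rnnState, diagonal]
  refine tendsto_finsetSum _ fun i _ => tendsto_finsetSum _ fun i' _ => ?_
  have continuous : Continuous fun G : Matrix (Fin nx) (Fin nx) ℝ =>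
      x (t - 1 - i) ⬝ᵥ G *ᵥ x' (s - 1 - i') := by fun_prop
  exact (continuous.tendsto _).comp (input _)

theorem tendsto_rnnNTK
    (input : ∀ w, Tendsto (fun n => wordGram (transitionMatrix (W n)) (Matrix.of (F n)) w) atTop
      (nhds ((νF * circularMoment νW w) • 1)))
    (output : ∀ w, Tendsto (fun n => wordGram (transitionMatrix (W n)) (Matrix.of (C n))ᵀ w) atTop
      (nhds ((νC * circularMoment νW w) • 1))) (t s : ℕ) (m m' : Fin ny) :
    Tendsto (fun n => rnnNTK n nx ny (W n, F n, C n) x x' t s m m') atTop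
      (nhds (if m = m' then ∑ j ∈ Finset.range (min t s + 1),
        (νC * (j * νF * νW ^ (j - 1) + νW ^ j) + νF * νW ^ j) * (x (t - j) ⬝ᵥ x' (s - j))
        else 0)) := by
  have readout (j j' : ℕ) : Tendsto (fun n : ℕ => (n : ℝ)⁻¹ *
      ((C n m ᵥ* transitionMatrix (W n) ^ j) ⬝ᵥ (C n m' ᵥ* transitionMatrix (W n) ^ j')))
      atTop (nhds (if j = j' then if m = m' then νC * νW ^ j else 0 else 0)) := by
    have entry := tendsto_pi_nhds.1 (tendsto_pi_nhds.1
      (output (List.replicate j true ++ List.replicate j' false)) m) m'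
    have moment := circularMoment_replicate_append_replicate νW true j j'
    rw [Bool.not_true] at moment
    simp only [wordGram_transpose_apply, moment, Matrix.smul_apply, Matrix.one_apply] at entry
    simpa [← ite_and, and_comm] using! entry
  have hidden := tendsto_rnnState_dotProduct_rnnState (x := x) (x' := x') input
  have double_sum := tendsto_finsetSum (Finset.range (t + 1)) fun j _ =>
    tendsto_finsetSum (Finset.range (s + 1)) fun j' _ => (readout j j').mul
      ((hidden (t - j) (s - j')).add_const (x (t - j) ⬝ᵥ x' (s - j')))
  simp only [ite_mul, zero_mul] at double_sum
  rw [sum_range_sum_range_ite_eq _ _ fun j j' => if m = m' then νC * νW ^ j *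
    (limitStateKernel x x' νW νF (t - j) (s - j') + x (t - j) ⬝ᵥ x' (s - j')) else 0,
    Nat.add_min_add_right] at double_sum
  simp only [rnnNTK_eq_sum, ← sum_mul_add_limitStateKernel]
  by_cases h : m = m'
  · simpa only [h, if_true] using double_sum.add (hidden (t + 1) (s + 1))
  · simpa only [h, if_false, add_zero, Finset.sum_const_zero] using double_sum

end KernelLimit

/-- In the infinite-width limit, the NTK of the linear RNN with
parameters `(W,F,C)` initialized i.i.d. `N(0,ν_W)`, `N(0,ν_F)`, `N(0,ν_C)`
converges almost surely to `𝒯(x)ᵀ D(ρ) 𝒯(x') ⊗ I_{n_y}` with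
`ρ_j = ν_C (j ν_F ν_W^{j-1} + ν_W^j) + ν_F ν_W^j`: the linear RNN NTK is the NTK
of a scaled 1D convolutional model with these scale factors. -/
theorem rnn_ntk_limit (nx ny T : ℕ) (νW νF νC : NNReal)
    (hνW : 0 < (νW : ℝ)) (hνF : 0 < (νF : ℝ)) (hνC : 0 < (νC : ℝ))
    (Ω : Type*) [MeasureSpace Ω] [IsProbabilityMeasure (ℙ : Measure Ω)]
    (W : (n : ℕ) → Ω → (Fin n → Fin n → ℝ))
    (F : (n : ℕ) → Ω → (Fin n → Fin nx → ℝ))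
    (C : (n : ℕ) → Ω → (Fin ny → Fin n → ℝ))
    (hWmeas : ∀ n, Measurable (W n)) (hFmeas : ∀ n, Measurable (F n))
    (hCmeas : ∀ n, Measurable (C n))
    (hjoint : ∀ n, Measure.map (fun ω => (W n ω, F n ω, C n ω)) ℙ =
      (Measure.pi fun _ : Fin n => Measure.pi fun _ : Fin n => gaussianReal 0 νW).prod
        ((Measure.pi fun _ : Fin n => Measure.pi fun _ : Fin nx =>
            gaussianReal 0 νF).prod
          (Measure.pi fun _ : Fin ny => Measure.pi fun _ : Fin n =>
            gaussianReal 0 νC)))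
    (x x' : ℕ → Fin nx → ℝ) :
    ∀ᵐ ω ∂(ℙ : Measure Ω), ∀ (t s : Fin T) (m m' : Fin ny),
      Tendsto (fun n : ℕ =>
          rnnNTK n nx ny (W n ω, F n ω, C n ω) x x' (t : ℕ) (s : ℕ) m m')
        atTop
        (nhds (Matrix.kroneckerMap (· * ·)
          ((toepMat T nx x)ᵀ *
            scaleMat T nx (fun j =>
              (νC : ℝ) * (j * νF * (νW : ℝ) ^ (j - 1) + (νW : ℝ) ^ j) +
                (νF : ℝ) * (νW : ℝ) ^ j) *
            toepMat T nx x')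
          (1 : Matrix (Fin ny) (Fin ny) ℝ) (t, m) (s, m'))) := by
  have law (n : ℕ) :
      HasLaw (fun ω => (W n ω, F n ω, C n ω)) (weightLaw n nx ny νW νF νC) ℙ :=
    ⟨((hWmeas n).prodMk ((hFmeas n).prodMk (hCmeas n))).aemeasurable, hjoint n⟩
  filter_upwards [ae_tendsto_wordGram_weights law] with ω hω t s m m'
  rw [kronecker_toepMat_apply]
  exact tendsto_rnnNTK (fun w => (hω w).1) (fun w => (hω w).2) t s m m'
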